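/- arXiv:1906.09171 — 5 statements merged into one kernel-verified Lean document; each statement's English description precedes it below -/
import Mathlib

section
/- Let K ⊆ L be convex bodies in ℝ^d and let r ≥ 0. Then the Lebesgue measure of the outer r-layer of K is at most that of L: vol({x ∈ ℝ^d : dist(x, K) ≤ r} \ K) ≤ vol({x ∈ ℝ^d : dist(x, L) ≤ r} \ L). -/
/-!
Push every point `x` outside `K` a distance `r` along the outer unit normal `n x`, the gradient of
`x ↦ infDist x K`. This map does not decrease distances, because the gradient of a convex function
is monotone, and it increases the distance to `K` by `r`. It therefore sends `L \ K` into
`cthickening r L \ cthickening r K` without decreasing its measure. Cancelling the measure of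
`L \ cthickening r K`, the part of `L` that lies in both of these sets, gives the inequality
between the outer layers.
-/

open MeasureTheory Metric Module Set
open scoped ENNReal NNReal

section InnerProductSpace

variable {E : Type*} [NormedAddCommGroup E] [InnerProductSpace ℝ E]

theorem norm_le_norm_add_of_inner_nonneg {x y : E} (h : 0 ≤ inner ℝ x y) : ‖x‖ ≤ ‖x + y‖ := by
  have hsq : ‖x‖ ^ 2 ≤ ‖x + y‖ ^ 2 := by
    rw [norm_add_sq_real]
    nlinarith [sq_nonneg ‖y‖]
  exact le_of_sq_le_sq hsq (norm_nonneg _)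

theorem antilipschitzWith_id_add_of_monotone {f : E → E}
    (hf : ∀ x y, 0 ≤ inner ℝ (x - y) (f x - f y)) : AntilipschitzWith 1 fun x ↦ x + f x := by
  refine AntilipschitzWith.of_le_mul_dist fun x y ↦ ?_
  rw [NNReal.coe_one, one_mul, dist_eq_norm, dist_eq_norm, add_sub_add_comm]
  exact norm_le_norm_add_of_inner_nonneg (hf x y)

theorem inner_sub_nonneg_of_subgradient {φ : E → ℝ} {g : E → E}
    (hg : ∀ x z, φ x + inner ℝ (g x) (z - x) ≤ φ z) (x y : E) :
    0 ≤ inner ℝ (x - y) (g x - g y) := by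
  have hxy := hg x y
  have hyx := hg y x
  rw [← neg_sub x y, inner_neg_right] at hxy
  rw [real_inner_comm, inner_sub_left]
  linarith

variable {K : Set E}

theorem exists_infDist_eq_dist_and_inner_nonpos (hK : Convex ℝ K) (hc : IsComplete K)
    (hne : K.Nonempty) (x : E) :
    ∃ p ∈ K, infDist x K = dist x p ∧ ∀ y ∈ K, inner ℝ (x - p) (y - p) ≤ 0 := by
  obtain ⟨p, hp, hxp⟩ := exists_norm_eq_iInf_of_complete_convex hne hc hK x
  refine ⟨p, hp, ?_, (norm_eq_iInf_iff_real_inner_le_zero hK hp).1 hxp⟩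
  simp only [infDist_eq_iInf, dist_eq_norm, hxp]

theorem exists_unit_subgradient_infDist (hK : Convex ℝ K) (hc : IsComplete K) (hne : K.Nonempty)
    {x : E} (hx : x ∉ K) :
    ∃ u : E, ‖u‖ = 1 ∧ ∀ z, infDist x K + inner ℝ u (z - x) ≤ infDist z K := by
  obtain ⟨p, hp, hxp, hsupport⟩ := exists_infDist_eq_dist_and_inner_nonpos hK hc hne x
  have hpos : 0 < ‖x - p‖ := norm_sub_pos_iff.2 fun h ↦ hx (h ▸ hp)
  set u := ‖x - p‖⁻¹ • (x - p) with hu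
  have hu_norm : ‖u‖ = 1 := norm_smul_inv_norm (𝕜 := ℝ) (norm_pos_iff.1 hpos)
  have hu_sub : inner ℝ u (x - p) = ‖x - p‖ := by
    rw [hu, real_inner_smul_left, real_inner_self_eq_norm_sq]
    field_simp
  refine ⟨u, hu_norm, fun z ↦ (le_infDist hne).2 fun y hy ↦ ?_⟩
  have hu_support : inner ℝ u (y - p) ≤ 0 := by
    rw [hu, real_inner_smul_left]
    exact mul_nonpos_of_nonneg_of_nonpos (by positivity) (hsupport y hy)
  calc infDist x K + inner ℝ u (z - x)
      = inner ℝ u (z - y) + inner ℝ u (y - p) := by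
        rw [hxp, dist_eq_norm, ← hu_sub, ← inner_add_right, ← inner_add_right]
        congr 1
        abel
    _ ≤ inner ℝ u (z - y) := add_le_of_nonpos_right hu_support
    _ ≤ ‖u‖ * ‖z - y‖ := real_inner_le_norm u (z - y)
    _ = dist z y := by rw [hu_norm, one_mul, dist_eq_norm]

theorem exists_subgradient_infDist (hK : Convex ℝ K) (hc : IsComplete K) (hne : K.Nonempty) :
    ∃ n : E → E, (∀ x, ‖n x‖ ≤ 1) ∧ (∀ x ∉ K, ‖n x‖ = 1) ∧
      ∀ x z, infDist x K + inner ℝ (n x) (z - x) ≤ infDist z K := by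
  have h (x : E) : ∃ u : E, ‖u‖ ≤ 1 ∧ (x ∉ K → ‖u‖ = 1) ∧
      ∀ z, infDist x K + inner ℝ u (z - x) ≤ infDist z K := by
    by_cases hx : x ∈ K
    · exact ⟨0, by simp, fun h ↦ absurd hx h, by simp [infDist_zero_of_mem hx, infDist_nonneg]⟩
    · obtain ⟨u, hu, hsub⟩ := exists_unit_subgradient_infDist hK hc hne hx
      exact ⟨u, hu.le, fun _ ↦ hu, hsub⟩
  choose n hn_le hn_eq hsub using h
  exact ⟨n, hn_le, hn_eq, hsub⟩

end InnerProductSpace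

theorem mem_cthickening_iff_infDist_le {X : Type*} [PseudoMetricSpace X] {s : Set X} {x : X}
    {r : ℝ} (hs : s.Nonempty) (hr : 0 ≤ r) : x ∈ cthickening r s ↔ infDist x s ≤ r := by
  rw [mem_cthickening_iff, ENNReal.le_ofReal_iff_toReal_le (infEDist_ne_top hs) hr, infDist]

theorem exists_antilipschitzWith_notMem_cthickening {E : Type*} [NormedAddCommGroup E]
    [InnerProductSpace ℝ E] {K : Set E} (hK : Convex ℝ K) (hc : IsComplete K) (hne : K.Nonempty)
    {r : ℝ} (hr : 0 ≤ r) :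
    ∃ T : E → E, AntilipschitzWith 1 T ∧ (∀ x, dist (T x) x ≤ r) ∧
      ∀ x ∉ K, T x ∉ cthickening r K := by
  obtain ⟨n, hn_le, hn_eq, hsub⟩ := exists_subgradient_infDist hK hc hne
  refine ⟨fun x ↦ x + r • n x, antilipschitzWith_id_add_of_monotone fun x y ↦ ?_, fun x ↦ ?_,
    fun x hx ↦ ?_⟩
  · rw [← smul_sub, real_inner_smul_right]
    exact mul_nonneg hr (inner_sub_nonneg_of_subgradient hsub x y)
  · rw [dist_self_add_left, norm_smul, Real.norm_of_nonneg hr]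
    exact mul_le_of_le_one_right hr (hn_le x)
  · rw [mem_cthickening_iff_infDist_le hne hr, not_le]
    have hpos : 0 < infDist x K := (hc.isClosed.notMem_iff_infDist_pos hne).1 hx
    have hgain : infDist x K + r ≤ infDist (x + r • n x) K := by
      simpa [real_inner_smul_right, hn_eq x hx] using hsub x (x + r • n x)
    linarith

section Measure

variable {E : Type*} [NormedAddCommGroup E] [MeasurableSpace E] [BorelSpace E]

theorem addHaar_le_mul_image_of_antilipschitzWith [NormedSpace ℝ E] [FiniteDimensional ℝ E]
    (μ : Measure E) [μ.IsAddHaarMeasure] {T : E → E} {c : ℝ≥0} (hT : AntilipschitzWith c T)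
    (s : Set E) : μ s ≤ c ^ finrank ℝ E * μ (T '' s) := by
  rw [μ.isAddLeftInvariant_eq_smul μH[finrank ℝ E]]
  simp only [Measure.smul_apply, mul_smul_comm]
  gcongr
  simpa using hT.le_hausdorffMeasure_image (Nat.cast_nonneg (finrank ℝ E)) s

variable [InnerProductSpace ℝ E] [FiniteDimensional ℝ E] (μ : Measure E) [μ.IsAddHaarMeasure]
  {K L : Set E} {r : ℝ}

theorem measure_sdiff_le_measure_cthickening_sdiff (hK : Convex ℝ K) (hc : IsClosed K)
    (hne : K.Nonempty) (hr : 0 ≤ r) (L : Set E) :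
    μ (L \ K) ≤ μ (cthickening r L \ cthickening r K) := by
  obtain ⟨T, hT, hdist, havoid⟩ :=
    exists_antilipschitzWith_notMem_cthickening hK hc.isComplete hne hr
  have hmaps : T '' (L \ K) ⊆ cthickening r L \ cthickening r K := by
    rintro _ ⟨x, ⟨hxL, hxK⟩, rfl⟩
    exact ⟨mem_cthickening_of_dist_le _ x r L hxL (hdist x), havoid x hxK⟩
  calc μ (L \ K)
      ≤ μ (T '' (L \ K)) := by
        simpa using addHaar_le_mul_image_of_antilipschitzWith μ hT (L \ K)
    _ ≤ μ (cthickening r L \ cthickening r K) := measure_mono hmaps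

theorem measure_inter_cthickening_sdiff_le (hK : Convex ℝ K) (hc : IsClosed K)
    (hne : K.Nonempty) (hr : 0 ≤ r) (hfin : μ (L \ K) ≠ ∞) :
    μ ((L \ K) ∩ cthickening r K) ≤ μ ((cthickening r L \ L) \ cthickening r K) := by
  have hfar_eq : (L \ K) \ cthickening r K = L \ cthickening r K := by
    rw [sdiff_sdiff, union_eq_right.2 (self_subset_cthickening K)]
  have hfar_fin : μ (L \ cthickening r K) ≠ ∞ :=
    measure_ne_top_of_subset (sdiff_subset_sdiff_right (self_subset_cthickening K)) hfin
  refine (ENNReal.add_le_add_iff_right hfar_fin).1 ?_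
  calc μ ((L \ K) ∩ cthickening r K) + μ (L \ cthickening r K)
      = μ (L \ K) := by
        rw [← hfar_eq, measure_inter_add_sdiff _ isClosed_cthickening.measurableSet]
    _ ≤ μ (cthickening r L \ cthickening r K) :=
        measure_sdiff_le_measure_cthickening_sdiff μ hK hc hne hr L
    _ ≤ μ ((cthickening r L \ L) \ cthickening r K ∪ L \ cthickening r K) :=
        measure_mono fun x hx ↦ by by_cases hxL : x ∈ L <;> simp_all
    _ ≤ μ ((cthickening r L \ L) \ cthickening r K) + μ (L \ cthickening r K) :=
        measure_union_le _ _

theorem outer_layer_volume_mono_general (hK : Convex ℝ K) (hc : IsClosed K) (hKL : K ⊆ L)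
    (hfin : μ (L \ K) ≠ ∞) (hr : 0 ≤ r) :
    μ (cthickening r K \ K) ≤ μ (cthickening r L \ L) := by
  rcases K.eq_empty_or_nonempty with rfl | hne
  · simp
  have hmono : cthickening r K ⊆ cthickening r L := cthickening_subset_of_subset r hKL
  calc μ (cthickening r K \ K)
      ≤ μ ((cthickening r L \ L) ∩ cthickening r K ∪ (L \ K) ∩ cthickening r K) :=
        measure_mono fun x hx ↦ by
          have := hmono hx.1
          by_cases hxL : x ∈ L <;> simp_all
    _ ≤ μ ((cthickening r L \ L) ∩ cthickening r K) + μ ((L \ K) ∩ cthickening r K) :=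
        measure_union_le _ _
    _ ≤ μ ((cthickening r L \ L) ∩ cthickening r K) +
          μ ((cthickening r L \ L) \ cthickening r K) := by
        gcongr _ + ?_
        exact measure_inter_cthickening_sdiff_le μ hK hc hne hr hfin
    _ = μ (cthickening r L \ L) :=
        measure_inter_add_sdiff _ isClosed_cthickening.measurableSet

end Measure

/-- If `K ⊆ L` are convex bodies in `ℝ^d` and `r ≥ 0`, then the Lebesgue
measure of the outer `r`-layer of `K` is at most that of `L`. -/
theorem outer_layer_volume_mono (d : ℕ) (hd : 1 ≤ d)
    (K L : Set (EuclideanSpace ℝ (Fin d)))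
    (hKcpt : IsCompact K) (hKconv : Convex ℝ K) (hKint : (interior K).Nonempty)
    (hLcpt : IsCompact L) (hLconv : Convex ℝ L) (hLint : (interior L).Nonempty)
    (hKL : K ⊆ L) (r : ℝ) (hr : 0 ≤ r) :
    MeasureTheory.volume ({x : EuclideanSpace ℝ (Fin d) | Metric.infDist x K ≤ r} \ K) ≤
      MeasureTheory.volume ({x : EuclideanSpace ℝ (Fin d) | Metric.infDist x L ≤ r} \ L) := by
  have hKne : K.Nonempty := hKint.mono interior_subset
  simpa only [← mem_cthickening_iff_infDist_le, hKne, hKne.mono hKL, hr, ofPred_mem_eq] using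
    outer_layer_volume_mono_general volume hKconv hKcpt.isClosed hKL
      (measure_ne_top_of_subset sdiff_subset hLcpt.measure_ne_top) hr
end

section
/- (Uniform Rokhlin Property.) Let (X, T, ℤ^d) be a minimal free action of ℤ^d on a compact metric space X. Then for any ε > 0 and any N ∈ ℕ there is an open set Ω ⊆ X such that the sets T^{-n}(Ω), n ∈ {0,1,…,N−1}^d, are pairwise disjoint, and limsup_{M→∞} (1/M^d) · sup_{x∈X} #{m ∈ {0,1,…,M−1}^d : T^m x ∉ ⋃_{n∈{0,1,…,N−1}^d} T^{-n}(Ω)} < ε. -/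
open Filter

/-!
Along the orbit of a point `x`, place a weighted site at every `k ∈ ℤ^d`: its weight is a large
multiple of `g (k +ᵥ x)`, where `g ≥ 0` is a continuous function which vanishes at boundedly spaced
points of every orbit and is less than `1` only on an open set with long return times. The power
diagram of these sites tiles `ℝ^d` by bounded cells, equivariantly along the orbit.

Shrinking every cell by a factor `θ < 1` towards its site keeps the proportion `θ^d` of the volume.
The shrunken cells lie in the cells of the power diagram with weights multiplied by `θ`, with a
margin quadratic in the distance between the sites, so that even their `√d * N`-neighbourhoods do.
Up to a proportion `1 - θ^d`, the lattice points thus lie deep inside a cell of the new diagram,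
which depends on `x` in an open way. The cell of a site `q` is cut into the cubes of side `N` with
corners in `q + Nℤ^d`, and the corners of those cubes that lie inside the cell form the base of the
tower.
-/

open AffineMap Function MeasureTheory Set Topology
open scoped Pointwise RealInnerProductSpace

section PowerDiagram

variable {κ E : Type*}

section Metric

variable [PseudoMetricSpace E] {p : κ → E} {s : κ → ℝ} {D : ℝ} {n : κ} {u : E}

/-- The power of the point `u` with respect to the site `p k` of weight `s k`. -/
def sitePower (p : κ → E) (s : κ → ℝ) (k : κ) (u : E) : ℝ :=
  dist u (p k) ^ 2 + s k

/-- The closed cell of the site `n` in the power diagram (weighted Voronoi tessellation) of the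
sites `p` with weights `s`. Larger weights make smaller cells. -/
def powerCell (p : κ → E) (s : κ → ℝ) (n : κ) : Set E :=
  {u | ∀ k, sitePower p s n u ≤ sitePower p s k u}

/-- The points for which the site `n` is the only one of least power. -/
def strictPowerCell (p : κ → E) (s : κ → ℝ) (n : κ) : Set E :=
  {u | ∀ k, k ≠ n → sitePower p s n u < sitePower p s k u}

theorem isClosed_powerCell : IsClosed (powerCell p s n) := by
  simp only [powerCell, sitePower, ofPred_forall]
  exact isClosed_iInter fun k ↦ isClosed_le (by fun_prop) (by fun_prop)

theorem pairwise_disjoint_strictPowerCell : Pairwise (Disjoint on strictPowerCell p s) :=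
  fun _ _ hne ↦ disjoint_left.2 fun _ hu hu' ↦ lt_asymm (hu _ hne.symm) (hu' _ hne)

/-- Nonnegative weights on the sites `p` for which the sites of weight zero are `D`-dense. -/
structure IsDenseWeight (p : κ → E) (s : κ → ℝ) (D : ℝ) : Prop where
  nonneg : ∀ k, 0 ≤ s k
  exists_eq_zero : ∀ u, ∃ k, s k = 0 ∧ dist u (p k) ≤ D

namespace IsDenseWeight

theorem smul (hs : IsDenseWeight p s D) {c : ℝ} (hc : 0 ≤ c) : IsDenseWeight p (c • s) D where
  nonneg k := mul_nonneg hc (hs.nonneg k)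
  exists_eq_zero u :=
    let ⟨k, hk, hkD⟩ := hs.exists_eq_zero u
    ⟨k, by simp [hk], hkD⟩

theorem exists_sitePower_le (hs : IsDenseWeight p s D) (u : E) :
    ∃ k, dist u (p k) ≤ D ∧ sitePower p s k u ≤ D ^ 2 := by
  obtain ⟨k, hk, hkD⟩ := hs.exists_eq_zero u
  refine ⟨k, hkD, ?_⟩
  rw [sitePower, hk, add_zero]
  gcongr

theorem sq_lt_sitePower (hs : IsDenseWeight p s D) {k : κ} (hk : D < dist u (p k)) :
    D ^ 2 < sitePower p s k u := by
  obtain ⟨_, hk₀, -⟩ := hs.exists_sitePower_le u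
  have hD : 0 ≤ D := dist_nonneg.trans hk₀
  calc D ^ 2 < dist u (p k) ^ 2 := by gcongr
    _ ≤ sitePower p s k u := le_add_of_nonneg_right (hs.nonneg k)

theorem sitePower_le (hs : IsDenseWeight p s D) (hu : u ∈ powerCell p s n) :
    sitePower p s n u ≤ D ^ 2 :=
  let ⟨k, _, hk⟩ := hs.exists_sitePower_le u
  (hu k).trans hk

theorem dist_le (hs : IsDenseWeight p s D) (hu : u ∈ powerCell p s n) : dist u (p n) ≤ D :=
  not_lt.1 fun h ↦ (hs.sq_lt_sitePower h).not_ge (hs.sitePower_le hu)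

theorem weight_le (hs : IsDenseWeight p s D) (hu : u ∈ powerCell p s n) : s n ≤ D ^ 2 :=
  (le_add_of_nonneg_left (sq_nonneg _)).trans (hs.sitePower_le hu)

theorem exists_mem_powerCell (hs : IsDenseWeight p s D)
    (hfin : {k | dist u (p k) ≤ D}.Finite) : ∃ n, u ∈ powerCell p s n := by
  obtain ⟨k₀, hk₀, hk₀D⟩ := hs.exists_sitePower_le u
  obtain ⟨n, -, hmin⟩ := exists_min_image _ (fun k ↦ sitePower p s k u) hfin ⟨k₀, hk₀⟩
  refine ⟨n, fun k ↦ (le_or_gt (dist u (p k)) D).elim (hmin k) fun hk ↦ ?_⟩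
  exact (hmin k₀ hk₀).trans (hk₀D.trans (hs.sq_lt_sitePower hk).le)

theorem mem_strictPowerCell_iff (hs : IsDenseWeight p s D) :
    u ∈ strictPowerCell p s n ↔
      ∀ k ∈ {k | dist u (p k) ≤ D}, k ≠ n → sitePower p s n u < sitePower p s k u := by
  refine ⟨fun h k _ ↦ h k, fun h k hkn ↦ ?_⟩
  rcases le_or_gt (dist u (p k)) D with hk | hk
  · exact h k hk hkn
  · obtain ⟨k₀, hk₀, hk₀D⟩ := hs.exists_sitePower_le u
    have hle : sitePower p s n u ≤ sitePower p s k₀ u := by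
      rcases eq_or_ne k₀ n with rfl | hne
      exacts [le_rfl, (h k₀ hk₀ hne).le]
    exact (hle.trans hk₀D).trans_lt (hs.sq_lt_sitePower hk)

theorem isOpen_setOf_mem_strictPowerCell {X : Type*} [TopologicalSpace X] {w : X → κ → ℝ}
    (hw : ∀ x, IsDenseWeight p (w x) D) (hcont : ∀ k, Continuous fun x ↦ w x k)
    (hfin : {k | dist u (p k) ≤ D}.Finite) : IsOpen {x | u ∈ strictPowerCell p (w x) n} := by
  simp only [(hw _).mem_strictPowerCell_iff, ofPred_forall]
  refine hfin.isOpen_biInter fun k _ ↦ isOpen_iInter_of_finite fun _ ↦ ?_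
  exact isOpen_lt (continuous_const.add (hcont n)) (continuous_const.add (hcont k))

end IsDenseWeight

end Metric

section InnerProduct

variable [NormedAddCommGroup E] [InnerProductSpace ℝ E] {p : κ → E} {s : κ → ℝ} {D θ : ℝ} {n : κ}
  {u : E}

theorem sitePower_homothety_add_le (hθ : 0 ≤ θ) (hu : u ∈ powerCell p s n) (k : κ) :
    sitePower p (θ • s) n (homothety (p n) θ u) + (1 - θ) * dist (p n) (p k) ^ 2 ≤
      sitePower p (θ • s) k (homothety (p n) θ u) := by
  have identity : dist (homothety (p n) θ u) (p k) ^ 2 - dist (homothety (p n) θ u) (p n) ^ 2 -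
      (1 - θ) * dist (p n) (p k) ^ 2 = θ * (dist u (p k) ^ 2 - dist u (p n) ^ 2) := by
    have hk : homothety (p n) θ u - p k = θ • (u - p n) + (p n - p k) := by
      rw [homothety_apply, vsub_eq_sub, vadd_eq_add]; abel
    have hn : homothety (p n) θ u - p n = θ • (u - p n) := by
      rw [homothety_apply, vsub_eq_sub, vadd_eq_add]; abel
    have hu : u - p k = (u - p n) + (p n - p k) := by abel
    simp only [dist_eq_norm, hk, hn, hu, norm_add_sq_real, inner_smul_left, norm_smul]
    simp only [RCLike.conj_to_real]
    ring
  have := mul_le_mul_of_nonneg_left (hu k) hθ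
  simp only [sitePower, Pi.smul_apply, smul_eq_mul] at this ⊢
  linarith

theorem homothety_mem_strictPowerCell (hp : Injective p) (hθ : 0 ≤ θ) (hθ1 : θ < 1)
    (hu : u ∈ powerCell p s n) : homothety (p n) θ u ∈ strictPowerCell p (θ • s) n := by
  intro k hk
  have hdist : 0 < dist (p n) (p k) := dist_pos.2 (hp.ne hk.symm)
  have hmargin : 0 < (1 - θ) * dist (p n) (p k) ^ 2 := mul_pos (sub_pos.2 hθ1) (pow_pos hdist 2)
  linarith [sitePower_homothety_add_le hθ hu k]

theorem dist_sq_sub_dist_sq_le (a b u v : E) :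
    dist u b ^ 2 - dist u a ^ 2 - 2 * dist v u * dist a b ≤ dist v b ^ 2 - dist v a ^ 2 := by
  have hva : v - a = (v - u) + (u - a) := by abel
  have hvb : v - b = (v - u) + (u - a) + (a - b) := by abel
  have hub : u - b = (u - a) + (a - b) := by abel
  have := (abs_le.1 (abs_real_inner_le_norm (v - u) (a - b))).1
  simp only [dist_eq_norm, hva, hvb, hub, norm_add_sq_real, inner_add_left]
  linarith

/-- A site of weight less than `K` loses against `n` because it is far from `n`, any other one
because of its weight. -/
theorem IsDenseWeight.mem_strictPowerCell_of_dist_homothety_le (hs : IsDenseWeight p s D)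
    (hθ : 0 < θ) (hθ1 : θ < 1) {K R : ℝ}
    (hsep : ∀ k l, s k < K → s l < K → k ≠ l → 2 * R < (1 - θ) * dist (p k) (p l))
    (hK : (R + D) ^ 2 + θ * D ^ 2 < θ * K) (hu : u ∈ powerCell p s n) {v : E}
    (hv : dist v (homothety (p n) θ u) ≤ R) : v ∈ strictPowerCell p (θ • s) n := by
  intro k hk
  have hDK : D ^ 2 < K := by nlinarith [sq_nonneg (R + D)]
  have hsn := hs.weight_le hu
  rcases lt_or_ge (s k) K with hkK | hkK
  · have hfar := hsep n k (hsn.trans_lt hDK) hkK hk.symm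
    have hdist : 0 < dist (p n) (p k) :=
      dist_pos.2 fun h ↦ by rw [h, dist_self] at hfar; linarith [dist_nonneg.trans hv]
    have hmargin := sitePower_homothety_add_le hθ.le hu k
    have hmove := dist_sq_sub_dist_sq_le (p n) (p k) (homothety (p n) θ u) v
    simp only [sitePower] at hmargin ⊢
    have := mul_lt_mul_of_pos_right hfar hdist
    have := mul_le_mul_of_nonneg_right hv hdist.le
    linarith
  · have hvn : dist v (p n) ≤ R + D := by
      have hshrink : dist (homothety (p n) θ u) (p n) ≤ D := by
        rw [dist_homothety_center, Real.norm_of_nonneg hθ.le, dist_comm]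
        exact (mul_le_of_le_one_left dist_nonneg hθ1.le).trans (hs.dist_le hu)
      linarith [dist_triangle v (homothety (p n) θ u) (p n)]
    calc sitePower p (θ • s) n v ≤ (R + D) ^ 2 + θ * D ^ 2 := by
          simp only [sitePower, Pi.smul_apply, smul_eq_mul]; gcongr
      _ < θ * s k := hK.trans_le (by gcongr)
      _ ≤ sitePower p (θ • s) k v := le_add_of_nonneg_left (sq_nonneg _)

theorem measure_le_measure_iUnion_homothety [FiniteDimensional ℝ E] [MeasurableSpace E]
    [BorelSpace E] (μ : Measure E) [μ.IsAddHaarMeasure] [Countable κ] (hp : Injective p)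
    (hθ : 0 < θ) (hθ1 : θ < 1) {A : Set E} (hA : MeasurableSet A)
    (hcov : A ⊆ ⋃ n, powerCell p s n) :
    ENNReal.ofReal (θ ^ Module.finrank ℝ E) * μ A ≤
      μ (⋃ n, homothety (p n) θ '' (A ∩ powerCell p s n)) := by
  have hmeas (n) : MeasurableSet (homothety (p n) θ '' (A ∩ powerCell p s n)) :=
    (hA.inter isClosed_powerCell.measurableSet).image_of_continuousOn_injOn
      (homothety_continuous _ _).continuousOn (homothety_injective _ hθ.ne').injOn
  have hsub (n) : homothety (p n) θ '' (A ∩ powerCell p s n) ⊆ strictPowerCell p (θ • s) n :=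
    image_subset_iff.2 fun _ hu ↦ homothety_mem_strictPowerCell hp hθ.le hθ1 hu.2
  have hdisj : Pairwise (Disjoint on fun n ↦ homothety (p n) θ '' (A ∩ powerCell p s n)) :=
    pairwise_disjoint_strictPowerCell.mono fun m n h ↦ h.mono (hsub m) (hsub n)
  calc ENNReal.ofReal (θ ^ Module.finrank ℝ E) * μ A
      ≤ ENNReal.ofReal (θ ^ Module.finrank ℝ E) * ∑' n, μ (A ∩ powerCell p s n) := by
        gcongr
        refine (measure_mono fun u hu ↦ ?_).trans (measure_iUnion_le _)
        rw [← inter_iUnion]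
        exact ⟨hu, hcov hu⟩
    _ = ∑' n, μ (homothety (p n) θ '' (A ∩ powerCell p s n)) := by
        simp only [Measure.addHaar_image_homothety, abs_of_pos (pow_pos hθ _),
          ENNReal.tsum_mul_left]
    _ = μ (⋃ n, homothety (p n) θ '' (A ∩ powerCell p s n)) := (measure_iUnion hdisj hmeas).symm

end InnerProduct

end PowerDiagram

section Lattice

variable {d : ℕ}

/-- The lattice point `k` of `ℤ^d` as a point of Euclidean space. -/
def intPoint (k : Fin d → ℤ) : EuclideanSpace ℝ (Fin d) :=
  WithLp.toLp 2 fun i ↦ (k i : ℝ)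

@[simp]
theorem intPoint_apply (k : Fin d → ℤ) (i : Fin d) : intPoint k i = k i := rfl

theorem intPoint_injective : Injective (intPoint (d := d)) := fun k l h ↦
  funext fun i ↦ by simpa using congrFun (congrArg WithLp.ofLp h) i

theorem intPoint_add (k l : Fin d → ℤ) : intPoint (k + l) = intPoint k + intPoint l := by
  ext i; simp

theorem dist_intPoint_add_right (u : EuclideanSpace ℝ (Fin d)) (k l : Fin d → ℤ) :
    dist (u + intPoint l) (intPoint (k + l)) = dist u (intPoint k) := by
  rw [intPoint_add, dist_add_right]

theorem dist_le_sqrt_mul_of_abs_sub_le {u v : EuclideanSpace ℝ (Fin d)} {r : ℝ} (hr : 0 ≤ r)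
    (h : ∀ i, |u i - v i| ≤ r) : dist u v ≤ √d * r := by
  rw [EuclideanSpace.dist_eq, ← Real.sqrt_sq hr, ← Real.sqrt_mul d.cast_nonneg]
  refine Real.sqrt_le_sqrt ?_
  calc ∑ i, dist (u i) (v i) ^ 2 ≤ ∑ _i : Fin d, r ^ 2 :=
        Finset.sum_le_sum fun i _ ↦ pow_le_pow_left₀ dist_nonneg (h i) 2
    _ = d * r ^ 2 := by simp

theorem finite_setOf_dist_intPoint_le (u : EuclideanSpace ℝ (Fin d)) (D : ℝ) :
    {k : Fin d → ℤ | dist u (intPoint k) ≤ D}.Finite := by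
  refine (finite_Icc (fun i ↦ ⌈u i - D⌉) (fun i ↦ ⌊u i + D⌋)).subset fun k hk ↦ ?_
  have h (i) := abs_le.1 ((PiLp.dist_apply_le u (intPoint k) i).trans hk)
  simp only [intPoint_apply] at h
  exact ⟨fun i ↦ Int.ceil_le.2 (by linarith [h i]), fun i ↦ Int.le_floor.2 (by linarith [h i])⟩

/-- The lattice point of the half-open unit cube that contains `u`. -/
noncomputable def floorPoint (u : EuclideanSpace ℝ (Fin d)) : Fin d → ℤ :=
  fun i ↦ ⌊u i⌋

theorem dist_intPoint_floorPoint_le (u : EuclideanSpace ℝ (Fin d)) :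
    dist u (intPoint (floorPoint u)) ≤ √d := by
  rw [← mul_one √d]
  refine dist_le_sqrt_mul_of_abs_sub_le zero_le_one fun i ↦ ?_
  rw [intPoint_apply, floorPoint, Int.self_sub_floor, Int.abs_fract]
  exact (Int.fract_lt_one _).le

theorem volume_setOf_forall_mem_Ico (a b : Fin d → ℝ) :
    volume {u : EuclideanSpace ℝ (Fin d) | ∀ i, u i ∈ Ico (a i) (b i)} =
      ∏ i, ENNReal.ofReal (b i - a i) := by
  rw [← Real.volume_pi_Ico, ← (PiLp.volume_preserving_ofLp (Fin d)).measure_preimage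
    (MeasurableSet.univ_pi fun _ ↦ measurableSet_Ico).nullMeasurableSet]
  congr 1; ext u; simp

theorem measurableSet_setOf_forall_mem_Ico (a b : Fin d → ℝ) :
    MeasurableSet {u : EuclideanSpace ℝ (Fin d) | ∀ i, u i ∈ Ico (a i) (b i)} := by
  simp only [ofPred_forall]
  exact .iInter fun i ↦ measurableSet_Ico.preimage (by fun_prop)

theorem volume_le_ncard_of_floorPoint_mem {A : Set (EuclideanSpace ℝ (Fin d))}
    {S : Set (Fin d → ℤ)} (hS : S.Finite) (h : ∀ u ∈ A, floorPoint u ∈ S) :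
    volume A ≤ S.ncard := by
  have hunit (m : Fin d → ℤ) :
      volume {u : EuclideanSpace ℝ (Fin d) | ∀ i, u i ∈ Ico (m i : ℝ) (m i + 1)} = 1 := by
    rw [volume_setOf_forall_mem_Ico]
    simp
  calc volume A
      ≤ volume (⋃ m ∈ hS.toFinset,
          {u : EuclideanSpace ℝ (Fin d) | ∀ i, u i ∈ Ico (m i : ℝ) (m i + 1)}) :=
        measure_mono fun u hu ↦ mem_biUnion (hS.mem_toFinset.2 (h u hu)) fun i ↦
          ⟨Int.floor_le _, Int.lt_floor_add_one _⟩
    _ ≤ ∑ m ∈ hS.toFinset, 1 :=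
        (measure_biUnion_finset_le _ _).trans_eq (Finset.sum_congr rfl fun m _ ↦ hunit m)
    _ = S.ncard := by simp [ncard_eq_toFinset_card S hS]

/-- The discrete cube `{0, 1, …, N - 1}^d`. -/
def discreteCube (d N : ℕ) : Set (Fin d → ℤ) :=
  {n | ∀ i, 0 ≤ n i ∧ n i < N}

theorem discreteCube_eq_coe_piFinset (d N : ℕ) :
    discreteCube d N = Fintype.piFinset fun _ : Fin d ↦ Finset.Ico (0 : ℤ) N := by
  ext; simp [discreteCube]

theorem finite_discreteCube (d N : ℕ) : (discreteCube d N).Finite := by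
  rw [discreteCube_eq_coe_piFinset]
  exact Finset.finite_toSet _

theorem ncard_discreteCube (d N : ℕ) : (discreteCube d N).ncard = N ^ d := by
  rw [discreteCube_eq_coe_piFinset, ncard_coe_finset]
  simp

/-- Given the cells `c q` of a partial labelling of `ℤ^d`, the lattice points whose neighbourhood
of sup-norm radius `N` lies in a single cell. -/
def deepPoints {κ : Type*} (N : ℕ) (c : κ → Set (Fin d → ℤ)) : Set (Fin d → ℤ) :=
  {m | ∃ q, ∀ v : Fin d → ℤ, (∀ i, |v i - m i| < N) → v ∈ c q}

theorem dist_intPoint_le_of_abs_sub_floorPoint_lt {N : ℕ} {u : EuclideanSpace ℝ (Fin d)}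
    {v : Fin d → ℤ} (hv : ∀ i, |v i - floorPoint u i| < N) : dist (intPoint v) u ≤ √d * N := by
  refine dist_le_sqrt_mul_of_abs_sub_le N.cast_nonneg fun i ↦ ?_
  obtain ⟨hlo, hhi⟩ := abs_lt.1 (hv i)
  have hlo : (⌊u i⌋ - N : ℝ) ≤ v i - 1 := by
    exact_mod_cast (by grind [floorPoint] : ⌊u i⌋ - (N : ℤ) ≤ v i - 1)
  have hhi : (v i + 1 : ℝ) ≤ ⌊u i⌋ + N := by
    exact_mod_cast (by grind [floorPoint] : v i + 1 ≤ ⌊u i⌋ + (N : ℤ))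
  rw [intPoint_apply, abs_le]
  constructor <;> linarith [Int.floor_le (u i), Int.lt_floor_add_one (u i)]

theorem floorPoint_mem_discreteCube {P : ℕ} {D : ℝ} {u u' : EuclideanSpace ℝ (Fin d)}
    (hu : ∀ i, u i ∈ Ico D (P - D)) (huu' : dist u u' ≤ D) : floorPoint u' ∈ discreteCube d P := by
  intro i
  have hi := abs_le.1 ((PiLp.dist_apply_le u u' i).trans huu')
  rw [floorPoint, Int.floor_nonneg, Int.floor_lt, Int.cast_natCast]
  constructor <;> linarith [(hu i).1, (hu i).2]

theorem volume_setOf_forall_mem_Ico_sub {D : ℝ} {P : ℕ} (hP : 2 * D ≤ P) :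
    volume {u : EuclideanSpace ℝ (Fin d) | ∀ i, u i ∈ Ico D (P - D)} =
      ENNReal.ofReal ((P - 2 * D) ^ d) := by
  rw [volume_setOf_forall_mem_Ico, Finset.prod_const, Finset.card_fin,
    ENNReal.ofReal_pow (by linarith)]
  ring_nf

section DeepPoints

variable {s : (Fin d → ℤ) → ℝ} {D θ K : ℝ} {N P : ℕ}

theorem IsDenseWeight.floorPoint_homothety_mem (hs : IsDenseWeight intPoint s D) (hθ : 0 < θ)
    (hθ1 : θ < 1)
    (hsep : ∀ k l, s k < K → s l < K → k ≠ l →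
      2 * (√d * N) < (1 - θ) * dist (intPoint k) (intPoint l))
    (hK : (√d * N + D) ^ 2 + θ * D ^ 2 < θ * K) {n : Fin d → ℤ} {u : EuclideanSpace ℝ (Fin d)}
    (hu : ∀ i, u i ∈ Ico D (P - D)) (hun : u ∈ powerCell intPoint s n) :
    floorPoint (homothety (intPoint n) θ u) ∈ discreteCube d P ∩
      deepPoints N fun q ↦ intPoint ⁻¹' strictPowerCell intPoint (θ • s) q := by
  have hdist : dist u (homothety (intPoint n) θ u) ≤ D := by
    rw [dist_self_homothety, Real.norm_of_nonneg (by linarith), dist_comm]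
    exact (mul_le_of_le_one_left dist_nonneg (by linarith)).trans (hs.dist_le hun)
  exact ⟨floorPoint_mem_discreteCube hu hdist, n, fun v hv ↦
    hs.mem_strictPowerCell_of_dist_homothety_le hθ hθ1 hsep hK hun
      (dist_intPoint_le_of_abs_sub_floorPoint_lt hv)⟩

theorem IsDenseWeight.le_ncard_deepPoints (hs : IsDenseWeight intPoint s D) (hθ : 0 < θ)
    (hθ1 : θ < 1)
    (hsep : ∀ k l, s k < K → s l < K → k ≠ l →
      2 * (√d * N) < (1 - θ) * dist (intPoint k) (intPoint l))
    (hK : (√d * N + D) ^ 2 + θ * D ^ 2 < θ * K) (hP : 2 * D ≤ P) :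
    (θ * (P - 2 * D)) ^ d ≤ (discreteCube d P ∩
      deepPoints N fun q ↦ intPoint ⁻¹' strictPowerCell intPoint (θ • s) q).ncard := by
  have hvolume := measure_le_measure_iUnion_homothety volume intPoint_injective hθ hθ1
    (measurableSet_setOf_forall_mem_Ico (fun _ ↦ D) (fun _ ↦ P - D)) fun u _ ↦
      mem_iUnion.2 (hs.exists_mem_powerCell (finite_setOf_dist_intPoint_le u D))
  have hcount := hvolume.trans <| volume_le_ncard_of_floorPoint_mem
    (S := discreteCube d P ∩
      deepPoints N fun q ↦ intPoint ⁻¹' strictPowerCell intPoint (θ • s) q)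
    ((finite_discreteCube d P).inter_of_left _) <| by
      simp only [mem_iUnion]
      rintro _ ⟨n, u, ⟨hu, hun⟩, rfl⟩
      exact hs.floorPoint_homothety_mem hθ hθ1 hsep hK hu hun
  rwa [finrank_euclideanSpace_fin, volume_setOf_forall_mem_Ico_sub hP,
    ← ENNReal.ofReal_mul (by positivity), ← mul_pow, ← ENNReal.ofReal_natCast,
    ENNReal.ofReal_le_ofReal_iff (Nat.cast_nonneg _)] at hcount

end DeepPoints

end Lattice

section Marker

variable {G X : Type*} [AddGroup G] [TopologicalSpace X] [AddAction G X]

variable (G X) in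
/-- The marker property: for every finite set `F` of group elements there is an open set which
meets every orbit and to which no point returns under a nonzero element of `F`. -/
def HasMarkerProperty : Prop :=
  ∀ F : Set G, F.Finite → ∃ U : Set X, IsOpen U ∧
    (∀ n ∈ F, n ≠ 0 → Disjoint U (n +ᵥ U)) ∧ ∀ x, ∃ n : G, n +ᵥ x ∈ U

variable [ContinuousConstVAdd G X]

theorem exists_mem_isOpen_forall_disjoint_vadd [T2Space X] [IsCancelVAdd G X] {F : Set G}
    (hF : F.Finite) (p : X) :
    ∃ U : Set X, p ∈ U ∧ IsOpen U ∧ ∀ n ∈ F, n ≠ 0 → Disjoint U (n +ᵥ U) := by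
  have hsep : ∀ n ∈ F, ∃ U : Set X, p ∈ U ∧ IsOpen U ∧ (n ≠ 0 → Disjoint U (n +ᵥ U)) := by
    intro n _
    rcases eq_or_ne n 0 with rfl | hn
    · exact ⟨univ, mem_univ p, isOpen_univ, fun h ↦ (h rfl).elim⟩
    · obtain ⟨A, B, hA, hB, hpA, hpB, hAB⟩ :=
        t2_separation (x := p) (y := n +ᵥ p) fun h ↦ hn (IsCancelVAdd.eq_zero_of_vadd h.symm)
      refine ⟨A ∩ (n +ᵥ ·) ⁻¹' B, ⟨hpA, hpB⟩,
        hA.inter (hB.preimage (continuous_const_vadd n)), fun _ ↦ ?_⟩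
      exact hAB.mono inter_subset_left (image_subset_iff.2 inter_subset_right)
  choose! U hpU hU hdisj using hsep
  refine ⟨⋂ n ∈ F, U n, mem_iInter₂.2 hpU, hF.isOpen_biInter hU, fun n hn hn0 ↦ ?_⟩
  have hle : ⋂ n ∈ F, U n ⊆ U n := biInter_subset_of_mem hn
  exact (hdisj n hn hn0).mono hle (vadd_set_mono hle)

theorem HasMarkerProperty.of_isMinimal [T2Space X] [IsCancelVAdd G X] [AddAction.IsMinimal G X] :
    HasMarkerProperty G X := by
  intro F hF
  rcases isEmpty_or_nonempty X with hX | ⟨⟨p⟩⟩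
  · exact ⟨∅, isOpen_empty, by simp, hX.elim⟩
  · obtain ⟨U, hpU, hU, hdisj⟩ := exists_mem_isOpen_forall_disjoint_vadd hF p
    exact ⟨U, hU, hdisj, fun x ↦ hU.exists_vadd_mem G x ⟨p, hpU⟩⟩

theorem exists_continuous_zero_one_of_forall_exists_vadd_mem [CompactSpace X] [NormalSpace X]
    {U : Set X} (hU : IsOpen U) (hmeet : ∀ x, ∃ n : G, n +ᵥ x ∈ U) :
    ∃ (g : C(X, ℝ)) (F : Finset G),
      (∀ x, 0 ≤ g x) ∧ (∀ x, g x < 1 → x ∈ U) ∧ ∀ x, ∃ n ∈ F, g (n +ᵥ x) = 0 := by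
  have hopen (n : G) : IsOpen ((n +ᵥ ·) ⁻¹' U : Set X) := hU.preimage (continuous_const_vadd n)
  obtain ⟨F, hF⟩ := isCompact_univ.elim_finite_subcover _ hopen fun x _ ↦ mem_iUnion.2 (hmeet x)
  obtain ⟨v, hv, hvclosed, hvU⟩ := exists_iUnion_eq_closed_subset (fun n : F ↦ hopen n)
    (fun _ ↦ toFinite _) ((iUnion_subtype _ _).trans (univ_subset_iff.1 hF))
  have hZ : IsClosed (⋃ n : F, (n : G) +ᵥ v n) := isClosed_iUnion_of_finite fun n ↦
    (hvclosed n).vadd _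
  have hZU : Disjoint (⋃ n : F, (n : G) +ᵥ v n) Uᶜ := disjoint_compl_right_iff_subset.2 <|
    iUnion_subset fun n ↦ image_subset_iff.2 (hvU n)
  obtain ⟨g, hg0, hg1, hg⟩ := exists_continuous_zero_one_of_isClosed hZ hU.isClosed_compl hZU
  refine ⟨g, F, fun x ↦ (hg x).1, fun x hx ↦ ?_, fun x ↦ ?_⟩
  · by_contra hxU
    exact hx.ne (hg1 hxU)
  · obtain ⟨n, hn⟩ := mem_iUnion.1 (hv.ge (mem_univ x))
    exact ⟨n, n.2, hg0 (mem_iUnion.2 ⟨n, vadd_mem_vadd_set hn⟩)⟩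

end Marker

section Labelling

variable {d : ℕ} {X : Type*} [AddAction (Fin d → ℤ) X]

/-- The values of `g` along the orbit of `x`, as weights on the sites `ℤ^d`. -/
def orbitWeight (g : X → ℝ) (x : X) (k : Fin d → ℤ) : ℝ :=
  g (k +ᵥ x)

theorem vadd_mem_setOf_zero_mem_strictPowerCell_iff {g : X → ℝ} {x : X} {v q : Fin d → ℤ} :
    v +ᵥ x ∈ {y | 0 ∈ strictPowerCell intPoint (orbitWeight g y) (q - v)} ↔
      intPoint v ∈ strictPowerCell intPoint (orbitWeight g x) q := by
  have hpower (k : Fin d → ℤ) : sitePower intPoint (orbitWeight g (v +ᵥ x)) (k - v) 0 =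
      sitePower intPoint (orbitWeight g x) k (intPoint v) := by
    rw [sitePower, sitePower, ← dist_intPoint_add_right, zero_add, sub_add_cancel, orbitWeight,
      orbitWeight, vadd_vadd, sub_add_cancel]
  simp only [strictPowerCell, mem_ofPred_eq, ← hpower]
  rw [← (Equiv.subRight v).forall_congr_right]
  simp

theorem exists_isDenseWeight_orbitWeight {g : X → ℝ} (hg : ∀ x, 0 ≤ g x) {F : Finset (Fin d → ℤ)}
    (hF : ∀ x, ∃ n ∈ F, g (n +ᵥ x) = 0) :
    ∃ D, 0 ≤ D ∧ ∀ x, IsDenseWeight (intPoint (d := d)) (orbitWeight g x) D := by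
  obtain ⟨B, hB⟩ := (F.finite_toSet.image fun n ↦ dist 0 (intPoint n)).bddAbove
  refine ⟨max 0 (B + √d), le_max_left _ _, fun x ↦ ⟨fun k ↦ hg _, fun u ↦ ?_⟩⟩
  obtain ⟨n, hn, hn0⟩ := hF (floorPoint u +ᵥ x)
  refine ⟨n + floorPoint u, by rwa [orbitWeight, add_vadd], le_max_of_le_right ?_⟩
  have hnB : dist 0 (intPoint n) ≤ B := hB (mem_image_of_mem _ hn)
  rw [← dist_intPoint_add_right _ _ (floorPoint u), zero_add] at hnB
  linarith [dist_triangle u (intPoint (floorPoint u)) (intPoint (n + floorPoint u)),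
    dist_intPoint_floorPoint_le u]

theorem orbitWeight_separated {U : Set X} {L : ℝ}
    (hU : ∀ n ∈ {n : Fin d → ℤ | dist 0 (intPoint n) ≤ L}, n ≠ 0 → Disjoint U (n +ᵥ U))
    {x : X} {k l : Fin d → ℤ} (hk : k +ᵥ x ∈ U) (hl : l +ᵥ x ∈ U) (hkl : k ≠ l) :
    L < dist (intPoint k) (intPoint l) := by
  by_contra! hle
  refine disjoint_left.1 (hU (l - k) ?_ (sub_ne_zero.2 hkl.symm)) hl
    ⟨k +ᵥ x, hk, by simp [vadd_vadd]⟩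
  rwa [mem_ofPred_eq, ← dist_intPoint_add_right _ _ k, zero_add, sub_add_cancel]

theorem HasMarkerProperty.exists_labelling [TopologicalSpace X] [CompactSpace X] [NormalSpace X]
    [ContinuousConstVAdd (Fin d → ℤ) X] (hX : HasMarkerProperty (Fin d → ℤ) X) {θ : ℝ}
    (hθ : 0 < θ) (hθ1 : θ < 1) (N : ℕ) :
    ∃ V : (Fin d → ℤ) → Set X, (∀ q, IsOpen (V q)) ∧ Pairwise (Disjoint on V) ∧
      ∃ D : ℝ, 0 ≤ D ∧ ∀ (x : X) (P : ℕ), 2 * D ≤ P → (θ * (P - 2 * D)) ^ d ≤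
        (discreteCube d P ∩ deepPoints N fun q ↦ {v | v +ᵥ x ∈ V (q - v)}).ncard := by
  obtain ⟨L, hL⟩ : ∃ L, L = 2 * (√d * N) / (1 - θ) := ⟨_, rfl⟩
  obtain ⟨U, hU, hUL, hmeet⟩ := hX _ (finite_setOf_dist_intPoint_le 0 L)
  obtain ⟨g, F, hg0, hgU, hF⟩ := exists_continuous_zero_one_of_forall_exists_vadd_mem hU hmeet
  obtain ⟨D, hD, hdense⟩ := exists_isDenseWeight_orbitWeight hg0 hF
  obtain ⟨K, hK⟩ := exists_gt (((√d * N + D) ^ 2 + θ * D ^ 2) / θ)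
  have hK0 : 0 < K := lt_of_le_of_lt (by positivity) hK
  rw [div_lt_iff₀' hθ] at hK
  have hweight (x) : IsDenseWeight intPoint (orbitWeight (K • ⇑g) x) D := (hdense x).smul hK0.le
  have hlt {x} {k : Fin d → ℤ} (hk : orbitWeight (K • ⇑g) x k < K) : k +ᵥ x ∈ U :=
    hgU _ ((mul_lt_iff_lt_one_right hK0).1 hk)
  refine ⟨fun q ↦ {y | 0 ∈ strictPowerCell intPoint (orbitWeight (θ • K • ⇑g) y) q}, fun q ↦ ?_,
    fun q q' hqq' ↦ ?_, D, hD, fun x P hP ↦ ?_⟩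
  · refine IsDenseWeight.isOpen_setOf_mem_strictPowerCell (fun x ↦ (hweight x).smul hθ.le)
      (fun k ↦ ?_) (finite_setOf_dist_intPoint_le 0 D)
    exact ((g.continuous.comp (continuous_const_vadd k)).const_smul K).const_smul θ
  · exact disjoint_left.2 fun y hy hy' ↦
      disjoint_left.1 (pairwise_disjoint_strictPowerCell hqq') hy hy'
  · simp only [vadd_mem_setOf_zero_mem_strictPowerCell_iff]
    refine (hweight x).le_ncard_deepPoints hθ hθ1 (fun k l hk hl hkl ↦ ?_) hK hP
    rw [← div_lt_iff₀' (sub_pos.2 hθ1), ← hL]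
    exact orbitWeight_separated hUL (hlt hk) (hlt hl) hkl

end Labelling

section Tower

variable {d : ℕ} {X : Type*} [AddAction (Fin d → ℤ) X]

variable (d) in
/-- The union of the levels `-n +ᵥ Ω`, `n ∈ {0, 1, …, N - 1}^d`, of the Rokhlin tower over `Ω`. -/
def rokhlinTower (N : ℕ) (Ω : Set X) : Set X :=
  ⋃ n ∈ discreteCube d N, -n +ᵥ Ω

/-- Here `v +ᵥ x ∈ V (q - v)` means that, on the orbit of `x`, `v` lies in the cell of the site
`q`. The base of the tower consists of the points `y` for which the cube `{-(N - 1), …, 0}^d` lies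
in the cell of a site `q` of `Nℤ^d`. -/
def rokhlinBase (N : ℕ) (V : (Fin d → ℤ) → Set X) : Set X :=
  {y | ∃ q : Fin d → ℤ, (∀ i, (N : ℤ) ∣ q i) ∧ ∀ n ∈ discreteCube d N, -n +ᵥ y ∈ V (q + n)}

theorem eq_of_mem_discreteCube_of_forall_dvd_sub {N : ℕ} {n n' : Fin d → ℤ}
    (hn : n ∈ discreteCube d N) (hn' : n' ∈ discreteCube d N)
    (hdvd : ∀ i, (N : ℤ) ∣ n i - n' i) : n = n' := by
  funext i
  have habs : |n i - n' i| < N := by grind [hn i, hn' i]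
  exact sub_eq_zero.1 (Int.eq_zero_of_abs_lt_dvd (hdvd i) habs)

theorem isOpen_rokhlinBase [TopologicalSpace X] [ContinuousConstVAdd (Fin d → ℤ) X] {N : ℕ}
    {V : (Fin d → ℤ) → Set X} (hV : ∀ q, IsOpen (V q)) : IsOpen (rokhlinBase N V) := by
  simp only [rokhlinBase, ofPred_exists, ofPred_and]
  refine isOpen_iUnion fun q ↦ isOpen_const.inter ?_
  simp only [ofPred_forall]
  exact (finite_discreteCube d N).isOpen_biInter fun n _ ↦
    (hV (q + n)).preimage (continuous_const_vadd (-n))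

theorem pairwiseDisjoint_vadd_rokhlinBase {N : ℕ} {V : (Fin d → ℤ) → Set X}
    (hV : Pairwise (Disjoint on V)) :
    (discreteCube d N).PairwiseDisjoint fun n ↦ -n +ᵥ rokhlinBase N V := by
  refine fun n hn n' hn' hne ↦ disjoint_left.2 ?_
  rintro _ ⟨y, ⟨q, hq, hy⟩, rfl⟩ ⟨y', ⟨q', hq', hy'⟩, hyy'⟩
  have hmem : -n +ᵥ y ∈ V (q' + n') := hyy'.subst (motive := (· ∈ V (q' + n'))) (hy' n' hn')
  have hsite : q + n = q' + n' := hV.eq (not_disjoint_iff.2 ⟨_, hy n hn, hmem⟩)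
  refine hne (eq_of_mem_discreteCube_of_forall_dvd_sub hn hn' fun i ↦ ?_)
  have hi : q i + n i = q' i + n' i := congrFun hsite i
  rw [show n i - n' i = q' i - q i by lia]
  exact dvd_sub (hq' i) (hq i)

theorem vadd_mem_rokhlinTower_of_mem_deepPoints {N : ℕ} (hN : 0 < N) {V : (Fin d → ℤ) → Set X}
    {x : X} {m : Fin d → ℤ} (hm : m ∈ deepPoints N fun q ↦ {v | v +ᵥ x ∈ V (q - v)}) :
    m +ᵥ x ∈ rokhlinTower d N (rokhlinBase N V) := by
  obtain ⟨q, hq⟩ := hm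
  let n : Fin d → ℤ := fun i ↦ (q i - m i) % N
  have hn : n ∈ discreteCube d N := fun i ↦
    ⟨Int.emod_nonneg _ (by lia), Int.emod_lt_of_pos _ (by lia)⟩
  refine mem_iUnion₂.2 ⟨n, hn, (n + m) +ᵥ x, ⟨q - (n + m), fun i ↦ ?_, fun n' hn' ↦ ?_⟩, ?_⟩
  · have := Int.dvd_self_sub_emod (x := q i - m i) (m := N)
    rwa [sub_sub, add_comm (m i)] at this
  · have hcell := hq (n + m - n') fun i ↦ by
      have := hn i
      have := hn' i
      simp only [Pi.sub_apply, Pi.add_apply]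
      grind
    rw [vadd_vadd, ← sub_eq_neg_add]
    rwa [mem_ofPred_eq, sub_sub_eq_add_sub, ← sub_add_eq_add_sub] at hcell
  · simp [vadd_vadd]

end Tower

section OrbitCapacity

variable {d : ℕ} {X : Type*} [AddAction (Fin d → ℤ) X] {A : Set X}

variable (d) in
/-- The number of `m ∈ {0, 1, …, M - 1}^d` for which `m +ᵥ x` lies in `A`. -/
noncomputable def visitCount (M : ℕ) (A : Set X) (x : X) : ℕ :=
  Nat.card {m : Fin d → ℤ // m ∈ discreteCube d M ∧ m +ᵥ x ∈ A}

variable (d) in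
/-- The orbit capacity of `A`: the limit superior of the largest proportion of the points
`m +ᵥ x`, `m ∈ {0, 1, …, M - 1}^d`, which lie in `A`. -/
noncomputable def orbitCapacity (A : Set X) : ℝ :=
  limsup (fun M : ℕ ↦ (⨆ x, (visitCount d M A x : ℝ)) / (M : ℝ) ^ d) atTop

theorem visitCount_add_visitCount_compl (M : ℕ) (x : X) :
    visitCount d M A x + visitCount d M Aᶜ x = M ^ d := by
  rw [← ncard_discreteCube]
  exact ncard_inter_add_ncard_sdiff_eq_ncard _ {m | m +ᵥ x ∈ A} (finite_discreteCube d M)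

theorem orbitCapacity_le_of_tendsto {a : ℕ → ℝ} {c : ℝ}
    (hle : ∀ᶠ M in atTop, 0 ≤ a M ∧ ∀ x, visitCount d M A x ≤ a M)
    (ha : Tendsto (fun M : ℕ ↦ a M / (M : ℝ) ^ d) atTop (𝓝 c)) : orbitCapacity d A ≤ c := by
  have hbdd : IsBoundedUnder (· ≥ ·) atTop
      fun M : ℕ ↦ (⨆ x, (visitCount d M A x : ℝ)) / (M : ℝ) ^ d :=
    isBoundedUnder_of ⟨0, fun M ↦
      div_nonneg (Real.iSup_nonneg fun _ ↦ Nat.cast_nonneg _) (by positivity)⟩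
  rw [← ha.limsup_eq]
  refine limsup_le_limsup ?_ hbdd.isCoboundedUnder_le ha.isBoundedUnder_le
  filter_upwards [hle] with M hM
  gcongr
  exact Real.iSup_le hM.2 hM.1

theorem tendsto_pow_sub_mul_sub_pow_div_pow (d : ℕ) (θ C : ℝ) :
    Tendsto (fun M : ℕ ↦ ((M : ℝ) ^ d - (θ * (M - C)) ^ d) / (M : ℝ) ^ d) atTop
      (𝓝 (1 - θ ^ d)) := by
  have hlim : Tendsto (fun M : ℕ ↦ 1 - (θ * (1 - C / M)) ^ d) atTop (𝓝 (1 - θ ^ d)) := by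
    simpa using (((tendsto_const_div_atTop_nhds_zero_nat C).const_sub 1).const_mul θ).pow d
      |>.const_sub 1
  refine hlim.congr' ?_
  filter_upwards [eventually_gt_atTop 0] with M hM
  have hM : (M : ℝ) ≠ 0 := by positivity
  rw [sub_div, div_self (pow_ne_zero d hM), ← div_pow, mul_div_assoc, sub_div, div_self hM]

theorem orbitCapacity_compl_le {θ D : ℝ} (hθ : 0 ≤ θ) (hθ1 : θ ≤ 1) (hD : 0 ≤ D)
    (h : ∀ (x : X) (M : ℕ), D ≤ M → (θ * (M - D)) ^ d ≤ visitCount d M A x) :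
    orbitCapacity d Aᶜ ≤ 1 - θ ^ d := by
  refine orbitCapacity_le_of_tendsto ?_ (tendsto_pow_sub_mul_sub_pow_div_pow d θ D)
  filter_upwards [eventually_ge_atTop ⌈D⌉₊] with M hM
  have hDM : D ≤ M := Nat.ceil_le.1 hM
  refine ⟨sub_nonneg.2 (pow_le_pow_left₀ (mul_nonneg hθ (sub_nonneg.2 hDM)) ?_ d), fun x ↦ ?_⟩
  · nlinarith
  · have hsum : (visitCount d M A x + visitCount d M Aᶜ x : ℝ) = (M : ℝ) ^ d := by
      exact_mod_cast visitCount_add_visitCount_compl M x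
    linarith [h x M hDM]

end OrbitCapacity

theorem exists_one_sub_pow_lt (d : ℕ) {ε : ℝ} (hε : 0 < ε) :
    ∃ θ : ℝ, 0 < θ ∧ θ < 1 ∧ 1 - θ ^ d < ε := by
  have hlim : Tendsto (fun θ : ℝ ↦ 1 - θ ^ d) (𝓝[<] 1) (𝓝 0) :=
    (Continuous.tendsto' (by fun_prop) 1 0 (by simp)).mono_left nhdsWithin_le_nhds
  obtain ⟨θ, hθε, hθ⟩ :=
    ((hlim.eventually_lt_const hε).and (Ioo_mem_nhdsLT zero_lt_one)).exists
  exact ⟨θ, hθ.1, hθ.2, hθε⟩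

theorem uniform_rokhlin_property_general {d : ℕ} {X : Type*} [TopologicalSpace X] [CompactSpace X]
    [NormalSpace X] [AddAction (Fin d → ℤ) X] [ContinuousConstVAdd (Fin d → ℤ) X]
    (hX : HasMarkerProperty (Fin d → ℤ) X) {ε : ℝ} (hε : 0 < ε) {N : ℕ} (hN : 0 < N) :
    ∃ Ω : Set X, IsOpen Ω ∧ (discreteCube d N).PairwiseDisjoint (fun n ↦ -n +ᵥ Ω) ∧
      orbitCapacity d (rokhlinTower d N Ω)ᶜ < ε := by
  obtain ⟨θ, hθ, hθ1, hθε⟩ := exists_one_sub_pow_lt d hε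
  obtain ⟨V, hVopen, hVdisj, D, hD, hdeep⟩ := hX.exists_labelling hθ hθ1 N
  refine ⟨rokhlinBase N V, isOpen_rokhlinBase hVopen, pairwiseDisjoint_vadd_rokhlinBase hVdisj,
    (orbitCapacity_compl_le hθ.le hθ1.le (by positivity : 0 ≤ 2 * D) fun x M hM ↦ ?_).trans_lt hθε⟩
  refine (hdeep x M hM).trans (Nat.cast_le.2 (ncard_le_ncard ?_ ?_))
  · exact fun m hm ↦ ⟨hm.1, vadd_mem_rokhlinTower_of_mem_deepPoints hN hm.2⟩
  · exact (finite_discreteCube d M).subset fun m hm ↦ hm.1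

/-- Uniform Rokhlin Property: for a minimal free action of `ℤ^d` on a compact
metric space `X`, for any `ε > 0` and `N ∈ ℕ` there is an open set `Ω ⊆ X` such that the
sets `T^{-n}(Ω)`, `n ∈ {0,…,N-1}^d`, are pairwise disjoint and the orbit capacity of the
complement of the tower `⋃_n T^{-n}(Ω)` is less than `ε`. -/
theorem uniform_rokhlin_property {X : Type*} [MetricSpace X] [CompactSpace X]
    (d : ℕ) (hd : 1 ≤ d) (T : (Fin d → ℤ) → X → X)
    (hTc : ∀ n, Continuous (T n)) (hT0 : ∀ x, T 0 x = x)
    (hTadd : ∀ m n x, T (m + n) x = T m (T n x))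
    (hmin : ∀ x : X, Dense (Set.range fun n : Fin d → ℤ => T n x))
    (hfree : ∀ (x : X) (n : Fin d → ℤ), T n x = x → n = 0)
    (ε : ℝ) (hε : 0 < ε) (N : ℕ) (hN : 0 < N) :
    ∃ Ω : Set X, IsOpen Ω ∧
      (∀ n n' : Fin d → ℤ, (∀ i, 0 ≤ n i ∧ n i < (N : ℤ)) → (∀ i, 0 ≤ n' i ∧ n' i < (N : ℤ)) →
        n ≠ n' → Disjoint (T (-n) '' Ω) (T (-n') '' Ω)) ∧
      Filter.limsup (fun M : ℕ =>
        (⨆ x : X, (Nat.card {m : Fin d → ℤ // (∀ i, 0 ≤ m i ∧ m i < (M : ℤ)) ∧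
            T m x ∉ ⋃ n ∈ {n : Fin d → ℤ | ∀ i, 0 ≤ n i ∧ n i < (N : ℤ)}, T (-n) '' Ω} : ℝ))
          / (M : ℝ) ^ d) Filter.atTop < ε := by
  let : AddAction (Fin d → ℤ) X := { vadd := T, zero_vadd := hT0, add_vadd := hTadd }
  have : ContinuousConstVAdd (Fin d → ℤ) X := ⟨hTc⟩
  have : AddAction.IsMinimal (Fin d → ℤ) X := ⟨hmin⟩
  have : IsCancelVAdd (Fin d → ℤ) X :=
    isCancelVAdd_iff_eq_zero_of_vadd_eq.2 fun n x ↦ hfree x n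
  obtain ⟨Ω, hΩ, hdisj, hcap⟩ := uniform_rokhlin_property_general
    (HasMarkerProperty.of_isMinimal (G := Fin d → ℤ) (X := X)) hε hN
  exact ⟨Ω, hΩ, fun n n' hn hn' ↦ hdisj hn hn', hcap⟩
end

section
/- Let X be a compact metric space and let U₁, …, U_K ⊆ X be open sets that can be partitioned into M groups such that the sets within each group are pairwise disjoint. For each open set U ⊆ X choose a continuous function φ_U : X → [0, ∞) with U = φ_U^{-1}((0, ∞)). Then, in the C*-algebra M_{K+M}(C(X)) of (K+M)×(K+M) matrices over C(X), the diagonal element diag(φ_{U₁}, …, φ_{U_K}, 0, …, 0) is Cuntz subequivalent to the diagonal element diag(φ_{U₁∪⋯∪U_K}, …, φ_{U₁∪⋯∪U_K}, 0, …, 0) having M copies of φ_{U₁∪⋯∪U_K} on the diagonal. -/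
/-!
If `f` vanishes wherever `g` does, then `f` is a limit of products `s * g * f`, where `s` vanishes
wherever `f` does: take `s = n ‖f‖ ḡ / (1 + n ‖f‖ ‖g‖²)`, so that the error has absolute value
`‖f‖ / (1 + n ‖f‖ ‖g‖²)`, which decreases to `0`, and apply Dini's theorem. In the matrix algebra,
every diagonal entry of the left-hand side is routed through the copy of `g` that belongs to its
group. Two entries routed through the same copy do not interact, as their supports are disjoint.
-/

open Filter

/-- `a` is Cuntz subequivalent to `b`: there are sequences `(xᵢ)`, `(yᵢ)` with
`xᵢ * b * yᵢ → a`. -/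
def CuntzSubequiv {B : Type*} [Mul B] [TopologicalSpace B] (a b : B) : Prop :=
  ∃ x y : ℕ → B, Filter.Tendsto (fun i => x i * b * y i) Filter.atTop (nhds a)

/-- The complex-valued continuous function associated with a real-valued one. -/
noncomputable def cplx {X : Type*} [TopologicalSpace X] (f : C(X, ℝ)) : C(X, ℂ) :=
  (⟨Complex.ofReal, Complex.continuous_ofReal⟩ : C(ℝ, ℂ)).comp f

section Dini

variable {ι X E : Type*} [Preorder ι] [TopologicalSpace X] [PseudoMetricSpace E]

theorem tendsto_continuousMap_of_antitone_dist {F : ι → C(X, E)} {f : C(X, E)}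
    (hanti : ∀ x, Antitone fun i => dist (F i x) (f x))
    (hlim : ∀ x, Tendsto (F · x) atTop (nhds (f x))) : Tendsto F atTop (nhds f) := by
  have hdist : TendstoLocallyUniformly (fun i x => dist (F i x) (f x)) (fun _ => (0 : ℝ)) atTop :=
    Antitone.tendstoLocallyUniformly_of_forall_tendsto (fun _ => by fun_prop)
      (fun _ _ hij x => hanti x hij) continuous_const
      fun x => tendsto_iff_dist_tendsto_zero.1 (hlim x)
  refine ContinuousMap.tendsto_of_tendstoLocallyUniformly ?_
  simpa [Metric.tendstoLocallyUniformly_iff, dist_comm] using hdist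

end Dini

section ApproxInverse

open Function

variable {X 𝕜 : Type*} [TopologicalSpace X] [RCLike 𝕜]

theorem one_add_natCast_mul_norm_ne_zero (n : ℕ) (a b : 𝕜) :
    (1 + n * ‖a‖ * ‖b‖ ^ 2 : 𝕜) ≠ 0 := by
  have hpos : (0 : ℝ) < 1 + n * ‖a‖ * ‖b‖ ^ 2 := by positivity
  exact_mod_cast hpos.ne'

/-- Approximate inverses of `g` on the support of `f`, indexed by `n`: on the support of `f * g`
they converge pointwise to `g⁻¹`, and all of them vanish wherever `f` does. -/
noncomputable def approxInverse (f g : C(X, 𝕜)) (n : ℕ) : C(X, 𝕜) where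
  toFun x := n * ‖f x‖ * star (g x) / (1 + n * ‖f x‖ * ‖g x‖ ^ 2)
  continuous_toFun := by
    have := fun x => one_add_natCast_mul_norm_ne_zero n (f x) (g x)
    fun_prop (disch := assumption)

theorem approxInverse_apply (f g : C(X, 𝕜)) (n : ℕ) (x : X) :
    approxInverse f g n x = n * ‖f x‖ * star (g x) / (1 + n * ‖f x‖ * ‖g x‖ ^ 2) :=
  rfl

theorem support_approxInverse_subset (f g : C(X, 𝕜)) (n : ℕ) :
    support (approxInverse f g n) ⊆ support f := by
  intro x
  contrapose
  simp +contextual [approxInverse_apply]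

theorem dist_approxInverse_mul_mul (f g : C(X, 𝕜)) (n : ℕ) (x : X) :
    dist ((approxInverse f g n * g * f) x) (f x) = ‖f x‖ / (1 + n * ‖f x‖ * ‖g x‖ ^ 2) := by
  have hne := one_add_natCast_mul_norm_ne_zero n (f x) (g x)
  have herror : (approxInverse f g n * g * f) x - f x =
      -f x / ((1 + n * ‖f x‖ * ‖g x‖ ^ 2 : ℝ) : 𝕜) := by
    have hstar : star (g x) * g x = (‖g x‖ : 𝕜) ^ 2 := RCLike.conj_mul (g x)
    simp only [ContinuousMap.mul_apply, approxInverse_apply]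
    push_cast
    field_simp
    linear_combination (n * ‖f x‖ * f x : 𝕜) * hstar
  rw [dist_eq_norm, herror, norm_div, norm_neg, RCLike.norm_of_nonneg (by positivity)]

theorem tendsto_approxInverse_mul_mul {f g : C(X, 𝕜)} (hfg : support f ⊆ support g) :
    Tendsto (fun n => approxInverse f g n * g * f) atTop (nhds f) := by
  refine tendsto_continuousMap_of_antitone_dist (fun x m n hmn => ?_) fun x => ?_
  · simp only [dist_approxInverse_mul_mul]
    gcongr
  · rw [tendsto_iff_dist_tendsto_zero]
    simp only [dist_approxInverse_mul_mul]
    rcases eq_or_ne (f x) 0 with hf | hf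
    · simp [hf]
    · have hg : g x ≠ 0 := hfg hf
      have hweight : 0 < ‖f x‖ * ‖g x‖ ^ 2 := by positivity
      simp only [mul_assoc]
      exact tendsto_const_nhds.div_atTop <| tendsto_atTop_add_const_left _ _ <|
        tendsto_natCast_atTop_atTop.atTop_mul_const hweight

end ApproxInverse

section Diagonal

open Function Matrix

variable {n R : Type*} [Fintype n] [DecidableEq n]

theorem single_rows_mul_diagonal_mul_single_columns [NonUnitalNonAssocSemiring R]
    (γ : n → n) (s b t : n → R) :
    (of fun j => Pi.single (γ j) (s j)) * diagonal b * (of fun j => Pi.single (γ j) (t j))ᵀ =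
      of fun j k => if γ j = γ k then s j * b (γ j) * t k else 0 := by
  ext j k
  rcases eq_or_ne (γ j) (γ k) with h | h <;> simp [mul_apply, Pi.single_apply, h]

theorem cuntzSubequiv_diagonal [NonUnitalNonAssocSemiring R] [TopologicalSpace R] {a b : n → R}
    (γ : n → n) (s t : n → ℕ → R)
    (hlim : ∀ j, Tendsto (fun i => s j i * b (γ j) * t j i) atTop (nhds (a j)))
    (hortho : ∀ j k, j ≠ k → γ j = γ k → ∀ i, s j i * b (γ j) * t k i = 0) :
    CuntzSubequiv (diagonal a) (diagonal b) := by
  refine ⟨fun i => of fun j => Pi.single (γ j) (s j i),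
    fun i => (of fun j => Pi.single (γ j) (t j i))ᵀ, ?_⟩
  simp only [single_rows_mul_diagonal_mul_single_columns]
  refine tendsto_pi_nhds.2 fun j => tendsto_pi_nhds.2 fun k => ?_
  rcases eq_or_ne j k with rfl | hjk
  · simpa using hlim j
  · have hzero : ∀ i, (if γ j = γ k then s j i * b (γ j) * t k i else 0) = 0 := fun i =>
      ite_eq_right_iff.2 fun hγ => hortho j k hjk hγ i
    simpa only [hzero, of_apply, diagonal_apply_ne _ hjk] using tendsto_const_nhds

theorem cuntzSubequiv_diagonal_of_support {X 𝕜 : Type*} [TopologicalSpace X] [RCLike 𝕜]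
    {a b : n → C(X, 𝕜)} (γ : n → n) (hsupp : ∀ j, support (a j) ⊆ support (b (γ j)))
    (hdisj : ∀ j k, j ≠ k → γ j = γ k → Disjoint (support (a j)) (support (a k))) :
    CuntzSubequiv (diagonal a) (diagonal b) := by
  refine cuntzSubequiv_diagonal γ (fun j => approxInverse (a j) (b (γ j))) (fun j _ => a j)
    (fun j => tendsto_approxInverse_mul_mul (hsupp j)) fun j k hjk hγ i => ?_
  have hst := (hdisj j k hjk hγ).mono_left (support_approxInverse_subset (a j) (b (γ j)) i)
  have hmul : approxInverse (a j) (b (γ j)) i * a k = 0 := DFunLike.coe_injective <|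
    support_eq_empty_iff.1 <| (support_mul _ _).trans hst.inter_eq
  rw [mul_right_comm, hmul, zero_mul]

end Diagonal

theorem cuntz_overlap_general {X 𝕜 : Type*} [TopologicalSpace X] [RCLike 𝕜] {K M : ℕ}
    (G : Fin K → Fin M) (f : Fin K → C(X, 𝕜)) (g : C(X, 𝕜))
    (hdisj : ∀ k k', k ≠ k' → G k = G k' →
      Disjoint (Function.support (f k)) (Function.support (f k')))
    (hfg : ∀ k, Function.support (f k) ⊆ Function.support g) :
    CuntzSubequiv
      (Matrix.diagonal (fun j : Fin (K + M) => if h : (j : ℕ) < K then f ⟨j, h⟩ else 0))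
      (Matrix.diagonal (fun j : Fin (K + M) => if (j : ℕ) < M then g else 0)) := by
  refine cuntzSubequiv_diagonal_of_support
    (fun j => if h : (j : ℕ) < K then (G ⟨j, h⟩).castLE (Nat.le_add_left M K) else j)
    (fun j => ?_) fun j k hjk hγ => ?_
  · by_cases hj : (j : ℕ) < K
    · simpa [hj] using hfg ⟨j, hj⟩
    · simp [hj]
  · by_cases hj : (j : ℕ) < K
    · by_cases hk : (k : ℕ) < K
      · simp only [hj, hk, dif_pos] at hγ ⊢
        exact hdisj _ _ (by simpa [Fin.ext_iff] using hjk) (Fin.castLE_injective _ hγ)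
      · simp [hk]
    · simp [hj]

theorem support_cplx_of_nonneg {X : Type*} [TopologicalSpace X] {f : C(X, ℝ)}
    (hf : ∀ x, 0 ≤ f x) : Function.support (cplx f) = {x | 0 < f x} := by
  ext x
  simp [cplx, (hf x).lt_iff_ne']

/-- let `U₁, …, U_K ⊆ X` be open sets partitioned into `M` groups of
pairwise disjoint sets, let `φ_{U_k}` (here `f k`) be nonnegative continuous functions
with open support `U k`, and let `φ_{U₁∪⋯∪U_K}` (here `g`) have open support
`U₁ ∪ ⋯ ∪ U_K`.  Then in `M_{K+M}(C(X))` the diagonal element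
`diag(φ_{U₁}, …, φ_{U_K}, 0, …, 0)` is Cuntz subequivalent to the diagonal element
with `M` copies of `φ_{U₁∪⋯∪U_K}` and zeros elsewhere. -/
theorem cuntz_overlap {X : Type*} [MetricSpace X] [CompactSpace X]
    (K M : ℕ) (hK : 0 < K) (hM : 0 < M)
    (U : Fin K → Set X) (hUopen : ∀ k, IsOpen (U k))
    (G : Fin K → Fin M)
    (hdisj : ∀ k k', k ≠ k' → G k = G k' → Disjoint (U k) (U k'))
    (f : Fin K → C(X, ℝ)) (hf0 : ∀ k x, 0 ≤ f k x)
    (hfU : ∀ k, U k = {x | 0 < f k x})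
    (g : C(X, ℝ)) (hg0 : ∀ x, 0 ≤ g x)
    (hgU : (⋃ k, U k) = {x | 0 < g x}) :
    CuntzSubequiv
      (Matrix.diagonal (fun j : Fin (K + M) =>
        if h : (j : ℕ) < K then cplx (f ⟨j, h⟩) else 0))
      (Matrix.diagonal (fun j : Fin (K + M) =>
        if (j : ℕ) < M then cplx g else 0)) := by
  have hsupp k : Function.support (cplx (f k)) = U k := by rw [support_cplx_of_nonneg (hf0 k), hfU]
  refine cuntz_overlap_general G (fun k => cplx (f k)) (cplx g)
    (by simpa only [hsupp] using hdisj) fun k => ?_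
  simpa only [hsupp, support_cplx_of_nonneg hg0, ← hgU] using Set.subset_iUnion U k
end

section
/- Let Z be a locally compact metrizable space, let n ∈ ℕ, and let a and b be positive elements of C₀(Z, M_n(ℂ)) (continuous M_n(ℂ)-valued functions on Z vanishing at infinity) which are diagonal, i.e., a(t) = diag(a₁(t), …, a_n(t)) and b(t) = diag(b₁(t), …, b_n(t)) for continuous functions a₁, …, a_n, b₁, …, b_n : Z → [0, ∞) vanishing at infinity. For t ∈ Z write rank(a(t)) = #{i : aᵢ(t) ≠ 0} and rank(b(t)) = #{i : bᵢ(t) ≠ 0}. If rank(a(t)) ≤ (1/4)·rank(b(t)) and 4 < rank(b(t)) for every t ∈ Z, then a is Cuntz subequivalent to b in C₀(Z, M_n(ℂ)). -/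
open Filter ZeroAtInfty

/-!
Let `C` be a constant matrix all of whose minors are nonzero, for instance a Cauchy matrix. At a
point `t` where `rank (a t) ≤ rank (b t)`, the rows of `C` indexed by the support of `a t` and
equally many columns indexed by the support of `b t` form an invertible submatrix, so
`a t * C * b t * y = a t` has a solution `y`. A solution at `t` stays an approximate solution near
`t`, and approximate solutions form a convex set, so a partition of unity glues them to one
continuous function; where `a` is small the solution `0` is good enough, which makes the glued
function vanish at infinity. Hence `(a * C) * b * yₖ → a` for suitable `yₖ`.
-/

open scoped Topology

section DiagonalRank

open Matrix

variable {m n K : Type*} [Field K]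

/-- The Cauchy matrix with entries `1 / (x i - y j)`. When `x` and `y` are injective with
disjoint ranges, it is a constant matrix all of whose minors are nonzero; where `x i = y j` the
entry is `0`. -/
def cauchyMatrix (x : m → K) (y : n → K) : Matrix m n K :=
  of fun i j => (x i - y j)⁻¹

theorem cauchyMatrix_submatrix {k l : Type*} (x : m → K) (y : n → K) (p : k → m) (q : l → n) :
    (cauchyMatrix x y).submatrix p q = cauchyMatrix (x ∘ p) (y ∘ q) :=
  rfl

theorem det_cauchyMatrix_ne_zero [Fintype n] [DecidableEq n] {x y : n → K}
    (hx : x.Injective) (hy : y.Injective) (hxy : ∀ i j, x i ≠ y j) :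
    (cauchyMatrix x y).det ≠ 0 := by
  intro hdet
  obtain ⟨c, hc0, hc⟩ := exists_mulVec_eq_zero_iff.2 hdet
  have hw (j : n) : Lagrange.nodalWeight Finset.univ y j ≠ 0 :=
    Lagrange.nodalWeight_ne_zero hy.injOn (Finset.mem_univ j)
  -- The barycentric form of the interpolant of `r` at `x i` is a multiple of the `i`-th entry of
  -- `cauchyMatrix x y *ᵥ c`.
  let r : n → K := fun j => c j / Lagrange.nodalWeight Finset.univ y j
  have hroot (i : n) : (Lagrange.interpolate Finset.univ y r).eval (x i) = 0 := by
    have hci : ∑ j, (x i - y j)⁻¹ * c j = 0 := congrFun hc i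
    rw [Lagrange.eval_interpolate_not_at_node r fun j _ => hxy i j,
      ← mul_zero (Polynomial.eval _ _), ← hci]
    refine congrArg _ (Finset.sum_congr rfl fun j _ => ?_)
    simp only [r]
    field_simp [hw j]
  have hzero : Lagrange.interpolate Finset.univ y r = 0 :=
    Polynomial.eq_zero_of_degree_lt_of_eval_index_eq_zero Finset.univ hx.injOn
      (Lagrange.degree_interpolate_lt r hy.injOn) fun i _ => hroot i
  refine hc0 (funext fun j => ?_)
  have hrj : r j = 0 := by
    rw [← Lagrange.eval_interpolate_at_node r hy.injOn (Finset.mem_univ j), hzero,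
      Polynomial.eval_zero]
  exact (div_eq_zero_iff.1 hrj).resolve_right (hw j)

theorem exists_diagonal_mul_mul_diagonal_mul_eq {k : Type*} [Fintype k] [DecidableEq k]
    [Fintype m] [DecidableEq m] [Fintype n] [DecidableEq n] {u : m → K} {v : n → K}
    {C : Matrix m n K} {p : k → m} {q : k → n} (hp : ∀ i, u i ≠ 0 → i ∈ Set.range p)
    (hq : ∀ j, v (q j) ≠ 0) (hC : (C.submatrix p q).det ≠ 0) :
    ∃ y : Matrix n m K, diagonal u * C * diagonal v * y = diagonal u := by
  let M := (C * diagonal v).submatrix p q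
  have hM : M * M⁻¹ = 1 := by
    have hMC : M = C.submatrix p q * diagonal (v ∘ q) := by
      ext i j
      simp [M]
    refine mul_nonsing_inv M (isUnit_iff_ne_zero.2 ?_)
    rw [hMC, det_mul, det_diagonal]
    exact mul_ne_zero hC (Finset.prod_ne_zero_iff.2 fun j _ => hq j)
  let y : Matrix n m K :=
    (1 : Matrix n n K).submatrix id q * (M⁻¹ * (1 : Matrix m m K).submatrix p id)
  have hrows : (C * diagonal v * y).submatrix p id = (1 : Matrix m m K).submatrix p id := by
    have hcols : (C * diagonal v).submatrix p id * (1 : Matrix n n K).submatrix id q = M := by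
      ext i j
      simp [M, Matrix.mul_apply, Matrix.one_apply]
    calc (C * diagonal v * y).submatrix p id
        = (C * diagonal v).submatrix p id * y := rfl
      _ = M * (M⁻¹ * (1 : Matrix m m K).submatrix p id) := by rw [← Matrix.mul_assoc, hcols]
      _ = (1 : Matrix m m K).submatrix p id := by rw [← Matrix.mul_assoc, hM, Matrix.one_mul]
  refine ⟨y, ?_⟩
  ext i j
  rw [Matrix.mul_assoc, Matrix.mul_assoc, ← Matrix.mul_assoc C, diagonal_mul]
  by_cases hi : u i = 0
  · simp [diagonal_apply, hi]
  · obtain ⟨r, rfl⟩ := hp i hi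
    have hrow : (C * diagonal v * y) (p r) j = (1 : Matrix m m K) (p r) j :=
      congrFun (congrFun hrows r) j
    simp [hrow, Matrix.one_apply, diagonal_apply]

theorem exists_diagonal_mul_cauchyMatrix_mul_diagonal_mul_eq [Fintype m] [DecidableEq m]
    [Fintype n] [DecidableEq n] {x : m → K} {y : n → K} (hx : x.Injective) (hy : y.Injective)
    (hxy : ∀ i j, x i ≠ y j) {u : m → K} {v : n → K}
    (huv : Nat.card {i // u i ≠ 0} ≤ Nat.card {j // v j ≠ 0}) :
    ∃ Y : Matrix n m K, diagonal u * cauchyMatrix x y * diagonal v * Y = diagonal u := by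
  classical
  rw [Nat.card_eq_fintype_card, Nat.card_eq_fintype_card] at huv
  obtain ⟨e⟩ := Function.Embedding.nonempty_of_card_le huv
  refine exists_diagonal_mul_mul_diagonal_mul_eq (p := Subtype.val) (q := Subtype.val ∘ e)
    (fun i hi => ⟨⟨i, hi⟩, rfl⟩) (fun k => (e k).2) ?_
  rw [cauchyMatrix_submatrix]
  exact det_cauchyMatrix_ne_zero (hx.comp Subtype.val_injective)
    (hy.comp (Subtype.val_injective.comp e.injective)) fun _ _ => hxy _ _

end DiagonalRank

theorem exists_zeroAtInfty_forall_dist_lt {Z E F : Type*} [TopologicalSpace Z] [NormalSpace Z]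
    [ParacompactSpace Z] [AddCommGroup E] [Module ℝ E] [TopologicalSpace E] [ContinuousAdd E]
    [ContinuousSMul ℝ E] [SeminormedAddCommGroup F] [NormedSpace ℝ F] (L : Z → E →ₗ[ℝ] F)
    (hL : ∀ y, Continuous fun t => L t y) (a : C₀(Z, F))
    (ha : ∀ t, a t ∈ closure (Set.range (L t))) {ε : ℝ} (hε : 0 < ε) :
    ∃ y : C₀(Z, E), ∀ t, dist (L t (y t)) (a t) < ε := by
  classical
  have hac : Continuous a := map_continuous a
  -- The second condition makes every continuous selection of `T` vanish at infinity.
  let T : Z → Set E := fun t =>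
    L t ⁻¹' Metric.ball (a t) ε ∩ if ‖a t‖ < ε / 2 then {0} else Set.univ
  have hconv (t : Z) : Convex ℝ (T t) := by
    refine ((convex_ball _ _).linear_preimage (L t)).inter ?_
    split_ifs
    exacts [convex_singleton 0, convex_univ]
  have hnear {t : Z} {c : E} (hc : dist (L t c) (a t) < ε) :
      ∀ᶠ s in 𝓝 t, dist (L s c) (a s) < ε :=
    ((hL c).dist hac).continuousAt.eventually_lt_const hc
  have hlocal (t : Z) : ∃ c, ∀ᶠ s in 𝓝 t, c ∈ T s := by
    rcases lt_or_ge ‖a t‖ ε with hat | hat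
    · refine ⟨0, (hnear (by simpa using hat)).mono fun s hs => ⟨hs, ?_⟩⟩
      split_ifs <;> trivial
    · obtain ⟨_, ⟨c, rfl⟩, hc⟩ := Metric.mem_closure_iff.1 (ha t) ε hε
      have hlarge : ∀ᶠ s in 𝓝 t, ε / 2 < ‖a s‖ :=
        hac.norm.continuousAt.eventually_const_lt (by linarith)
      refine ⟨c, ((hnear (dist_comm (a t) _ ▸ hc)).and hlarge).mono fun s hs => ⟨hs.1, ?_⟩⟩
      rw [if_neg hs.2.not_gt]
      trivial
  obtain ⟨y, hy⟩ := exists_continuous_forall_mem_convex_of_local_const hconv hlocal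
  refine ⟨⟨y, tendsto_const_nhds.congr' ?_⟩, fun t => (hy t).1⟩
  have hsmall : ∀ᶠ t in cocompact Z, ‖a t‖ < ε / 2 :=
    (zero_at_infty a).norm.eventually_lt_const (by simpa using hε)
  filter_upwards [hsmall] with t ht
  have hyt := (hy t).2
  rw [if_pos ht] at hyt
  exact hyt.symm

section MatrixZeroAtInfty

variable {Z 𝕜 l m n : Type*} [TopologicalSpace Z]

/-- The identification of matrices over `C₀(Z, 𝕜)` with matrix-valued functions vanishing at
infinity; it gives sense to the value of such a matrix at a point. -/
def zeroAtInftyMatrixEquiv [Zero 𝕜] [TopologicalSpace 𝕜] :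
    Matrix m n C₀(Z, 𝕜) ≃ C₀(Z, Matrix m n 𝕜) where
  toFun A := ⟨⟨fun t => A.map (· t), continuous_matrix fun i j => map_continuous (A i j)⟩,
    tendsto_pi_nhds.2 fun i => tendsto_pi_nhds.2 fun j => zero_at_infty (A i j)⟩
  invFun φ := Matrix.of fun i j => ⟨⟨fun t => φ t i j, (map_continuous φ).matrix_elem i j⟩,
    ((zero_at_infty φ).apply_nhds i).apply_nhds j⟩
  left_inv _ := rfl
  right_inv _ := rfl

theorem zeroAtInftyMatrixEquiv_apply [Zero 𝕜] [TopologicalSpace 𝕜] (A : Matrix m n C₀(Z, 𝕜))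
    (t : Z) : zeroAtInftyMatrixEquiv A t = A.map (· t) :=
  rfl

theorem zeroAtInftyMatrixEquiv_mul_apply [Fintype m] [NonUnitalNonAssocSemiring 𝕜]
    [TopologicalSpace 𝕜] [IsTopologicalSemiring 𝕜] (A : Matrix l m C₀(Z, 𝕜))
    (B : Matrix m n C₀(Z, 𝕜)) (t : Z) :
    zeroAtInftyMatrixEquiv (A * B) t = zeroAtInftyMatrixEquiv A t * zeroAtInftyMatrixEquiv B t := by
  let ev : C₀(Z, 𝕜) →+ 𝕜 :=
    { toFun := (· t), map_zero' := rfl, map_add' := fun _ _ => rfl }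
  ext i j
  exact map_sum ev (fun k => A i k * B k j) Finset.univ

theorem zeroAtInftyMatrixEquiv_apply_of_isDiag [Zero 𝕜] [TopologicalSpace 𝕜] [DecidableEq n]
    {A : Matrix n n C₀(Z, 𝕜)} (hA : A.IsDiag) (t : Z) :
    zeroAtInftyMatrixEquiv A t = Matrix.diagonal fun i => A i i t := by
  rw [zeroAtInftyMatrixEquiv_apply, ← hA.diagonal_diag, Matrix.diagonal_map rfl]
  simp

variable [NormalSpace Z] [ParacompactSpace Z] [RCLike 𝕜] [Finite l] [Fintype m] [Finite n]

open scoped Matrix.Norms.Elementwise in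
theorem exists_forall_dist_mul_apply_lt (W : Matrix l m C₀(Z, 𝕜)) (a : Matrix l n C₀(Z, 𝕜))
    (h : ∀ t, ∃ y, zeroAtInftyMatrixEquiv W t * y = zeroAtInftyMatrixEquiv a t)
    {ε : ℝ} (hε : 0 < ε) :
    ∃ y : Matrix m n C₀(Z, 𝕜), ∀ i j t, dist ((W * y) i j t) (a i j t) < ε := by
  cases nonempty_fintype l
  cases nonempty_fintype n
  let L (t : Z) : Matrix m n 𝕜 →ₗ[ℝ] Matrix l n 𝕜 :=
    mulLeftLinearMap n ℝ (zeroAtInftyMatrixEquiv W t)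
  obtain ⟨φ, hφ⟩ := exists_zeroAtInfty_forall_dist_lt L
    (fun y => (map_continuous (zeroAtInftyMatrixEquiv W)).matrix_mul continuous_const)
    (zeroAtInftyMatrixEquiv a) (fun t => subset_closure (h t)) hε
  obtain ⟨y, rfl⟩ := zeroAtInftyMatrixEquiv.surjective φ
  refine ⟨y, fun i j t => ?_⟩
  let A : Matrix l n 𝕜 := zeroAtInftyMatrixEquiv (W * y) t
  let B : Matrix l n 𝕜 := zeroAtInftyMatrixEquiv a t
  calc dist ((W * y) i j t) (a i j t)
      ≤ dist A B := (dist_le_pi_dist (A i) (B i) j).trans (dist_le_pi_dist A B i)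
    _ = dist (L t (zeroAtInftyMatrixEquiv y t)) B := by
      rw [mulLeftLinearMap_apply, ← zeroAtInftyMatrixEquiv_mul_apply]
    _ < ε := hφ t

theorem exists_tendsto_mul_of_forall_exists_mul_eq (W : Matrix l m C₀(Z, 𝕜))
    (a : Matrix l n C₀(Z, 𝕜))
    (h : ∀ t, ∃ y, zeroAtInftyMatrixEquiv W t * y = zeroAtInftyMatrixEquiv a t) :
    ∃ y : ℕ → Matrix m n C₀(Z, 𝕜), Tendsto (fun k => W * y k) atTop (𝓝 a) := by
  choose y hy using fun k : ℕ =>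
    exists_forall_dist_mul_apply_lt W a h (Nat.one_div_pos_of_nat (α := ℝ) (n := k))
  refine ⟨y, tendsto_pi_nhds.2 fun i => tendsto_pi_nhds.2 fun j => ?_⟩
  rw [ZeroAtInftyContinuousMap.tendsto_iff_tendstoUniformly, Metric.tendstoUniformly_iff]
  intro ε hε
  filter_upwards [tendsto_one_div_add_atTop_nhds_zero_nat.eventually_lt_const hε] with k hk t
  rw [dist_comm]
  exact (hy k i j t).trans hk

end MatrixZeroAtInfty

theorem diagonal_rank_comparison_general {Z 𝕜 ι : Type*} [TopologicalSpace Z] [NormalSpace Z]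
    [ParacompactSpace Z] [RCLike 𝕜] [Fintype ι] {a b : Matrix ι ι C₀(Z, 𝕜)}
    (ha : a.IsDiag) (hb : b.IsDiag)
    (hrank : ∀ t, Nat.card {i // a i i t ≠ 0} ≤ Nat.card {i // b i i t ≠ 0}) :
    CuntzSubequiv a b := by
  classical
  obtain ⟨z⟩ : Nonempty (ι ⊕ ι ↪ 𝕜) := ⟨(Fintype.equivFin _).toEmbedding.trans
    (Fin.valEmbedding.trans Nat.castEmbedding)⟩
  let C : Matrix ι ι 𝕜 := cauchyMatrix (z ∘ Sum.inl) (z ∘ Sum.inr)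
  let x : Matrix ι ι C₀(Z, 𝕜) := Matrix.of fun i j => C i j • a i i
  suffices h : ∀ t, ∃ Y, zeroAtInftyMatrixEquiv (x * b) t * Y = zeroAtInftyMatrixEquiv a t by
    obtain ⟨y, hy⟩ := exists_tendsto_mul_of_forall_exists_mul_eq (x * b) a h
    exact ⟨fun _ => x, y, hy⟩
  intro t
  have hx : zeroAtInftyMatrixEquiv x t = Matrix.diagonal (fun i => a i i t) * C := by
    ext i j
    simp [x, zeroAtInftyMatrixEquiv_apply, mul_comm]
  rw [zeroAtInftyMatrixEquiv_mul_apply, hx, zeroAtInftyMatrixEquiv_apply_of_isDiag ha,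
    zeroAtInftyMatrixEquiv_apply_of_isDiag hb]
  exact exists_diagonal_mul_cauchyMatrix_mul_diagonal_mul_eq
    (z.injective.comp Sum.inl_injective) (z.injective.comp Sum.inr_injective)
    (fun _ _ => z.injective.ne Sum.inl_ne_inr) (hrank t)

/-- let `Z` be a locally compact metrizable space and let `a`, `b` be
positive diagonal elements of `C₀(Z, M_n(ℂ))` (realized as diagonal matrices over
`C₀(Z, ℂ)`), with diagonal entries given by nonnegative real-valued functions
`f i`, `g i`.  If `rank(a(t)) ≤ (1/4)·rank(b(t))` and `4 < rank(b(t))` for every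
`t ∈ Z`, then `a ≾ b`. -/
theorem diagonal_rank_comparison {Z : Type*} [MetricSpace Z] [LocallyCompactSpace Z]
    (n : ℕ) (a b : Matrix (Fin n) (Fin n) C₀(Z, ℂ))
    (f g : Fin n → Z → ℝ)
    (hf0 : ∀ i t, 0 ≤ f i t) (hg0 : ∀ i t, 0 ≤ g i t)
    (haf : ∀ i t, a i i t = (f i t : ℂ)) (hbg : ∀ i t, b i i t = (g i t : ℂ))
    (haod : ∀ i j, i ≠ j → a i j = 0) (hbod : ∀ i j, i ≠ j → b i j = 0)
    (hrank : ∀ t : Z,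
      4 * Nat.card {i : Fin n // f i t ≠ 0} ≤ Nat.card {i : Fin n // g i t ≠ 0})
    (hrank4 : ∀ t : Z, 4 < Nat.card {i : Fin n // g i t ≠ 0}) :
    CuntzSubequiv a b :=
  diagonal_rank_comparison_general haod hbod fun t => by
    simpa [haf, hbg] using (Nat.le_mul_of_pos_left _ four_pos).trans (hrank t)
end

section
/- Let T be a minimal action of ℤ^d on a nonempty compact metric space X and let F ⊆ X be a nonempty open set. Then there exist δ > 0 and N ∈ ℕ such that for every integer M ≥ N and every x ∈ X, #{m ∈ {0,1,…,M−1}^d : T^{-m}x ∈ F} > δ·M^d. -/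
/-!
Since `F` meets every orbit, compactness yields a finite set `K` of group elements such that every
point is brought into `F` by one of them. Hence the set of times at which the orbit of `x` visits
`F` is syndetic with a window `K` that does not depend on `x`, so it meets every cube of some fixed
side `L`. A cube of side `M` contains `⌊M / L⌋ ^ d` disjoint cubes of side `L`.
-/

open scoped Pointwise

lemma div_two_mul_le_natCast_div {R : Type*} [Field R] [LinearOrder R] [IsStrictOrderedRing R]
    {L M : ℕ} (hL : 0 < L) (hLM : L ≤ M) :
    (M : R) / (2 * L) ≤ (M / L : ℕ) := by
  have hquot : 1 ≤ M / L := (Nat.one_le_div_iff hL).2 hLM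
  have hM : M ≤ M / L * (2 * L) := by
    have := Nat.lt_mul_div_succ M hL
    nlinarith
  rw [div_le_iff₀ (by positivity)]
  exact_mod_cast hM

section Cube

variable {ι : Type*}

/-- The cube of lattice points `∏ i, {a i, …, a i + L - 1}` with lowest corner `a` and `L` points
along each edge. -/
def latticeCube (a : ι → ℤ) (L : ℕ) : Set (ι → ℤ) :=
  {m | ∀ i, a i ≤ m i ∧ m i < a i + L}

lemma coe_piFinset_Ico [Fintype ι] [DecidableEq ι] (a : ι → ℤ) (L : ℕ) :
    (Fintype.piFinset fun i => Finset.Ico (a i) (a i + L) : Set (ι → ℤ)) = latticeCube a L := by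
  ext m
  simp [latticeCube]

lemma finite_latticeCube [Finite ι] (a : ι → ℤ) (L : ℕ) : (latticeCube a L).Finite := by
  classical
  have := Fintype.ofFinite ι
  exact coe_piFinset_Ico a L ▸ Finset.finite_toSet _

lemma ncard_latticeCube [Fintype ι] (a : ι → ℤ) (L : ℕ) :
    (latticeCube a L).ncard = L ^ Fintype.card ι := by
  classical
  rw [← coe_piFinset_Ico, Set.ncard_coe_finset, Fintype.card_piFinset]
  simp

lemma exists_latticeCube_superset [Finite ι] (K : Finset (ι → ℤ)) :
    ∃ (a : ι → ℤ) (L : ℕ), 0 < L ∧ (K : Set (ι → ℤ)) ⊆ latticeCube a L := by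
  have := Fintype.ofFinite ι
  obtain ⟨r, -, hr⟩ := K.finite_toSet.isBounded.exists_pos_norm_le
  obtain ⟨n, hn⟩ := exists_nat_ge r
  refine ⟨fun _ => -n, 2 * n + 1, by lia, fun k hk i => ?_⟩
  have hki : |k i| ≤ n := by
    have h : ‖k i‖ ≤ n := (norm_le_pi_norm k i).trans ((hr k hk).trans hn)
    rw [Int.norm_eq_abs] at h
    exact_mod_cast h
  have := abs_le.1 hki
  push_cast
  lia

lemma exists_latticeCube_inter_nonempty_of_sub_eq_univ [Finite ι]
    (K : Finset (ι → ℤ)) :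
    ∃ L : ℕ, 0 < L ∧ ∀ A : Set (ι → ℤ), A - (K : Set (ι → ℤ)) = Set.univ →
      ∀ a, (latticeCube a L ∩ A).Nonempty := by
  obtain ⟨c, L, hL, hK⟩ := exists_latticeCube_superset K
  refine ⟨L, hL, fun A hA a => ?_⟩
  obtain ⟨m, hm, k, hk, hmk⟩ := Set.mem_sub.1 (hA ▸ Set.mem_univ (a - c))
  refine ⟨m, fun i => ?_, hm⟩
  have hki := hK hk i
  have hmki : m i - k i = a i - c i := congrFun hmk i
  lia

lemma pow_div_le_ncard_latticeCube_inter [Fintype ι] {A : Set (ι → ℤ)} {L : ℕ}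
    (hL : 0 < L) (hA : ∀ a, (latticeCube a L ∩ A).Nonempty) (b : ι → ℤ) (M : ℕ) :
    (M / L) ^ Fintype.card ι ≤ (latticeCube b M ∩ A).ncard := by
  let block : (ι → ℤ) → ι → ℤ := fun m i => (m i - b i) / L
  have hfin : (latticeCube b M ∩ A).Finite := (finite_latticeCube b M).inter_of_left A
  have hblock : latticeCube 0 (M / L) ⊆ block '' (latticeCube b M ∩ A) := by
    intro q hq
    obtain ⟨m, hm, hmA⟩ := hA (fun i => b i + q i * L)
    have hLM : ((M / L : ℕ) : ℤ) * L ≤ M := mod_cast Nat.div_mul_le_self M L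
    refine ⟨m, ⟨fun i => ?_, hmA⟩, funext fun i => ?_⟩
    · have hq0 : 0 ≤ q i := (hq i).1
      have hqM : q i + 1 ≤ (M / L : ℕ) := by simpa using (hq i).2
      have hlower : 0 ≤ q i * L := by positivity
      have hupper : (q i + 1) * L ≤ (M / L : ℕ) * L := by gcongr
      have := hm i
      constructor <;> linarith
    · have := hm i
      exact (Int.ediv_eq_iff_of_pos (mod_cast hL)).2 ⟨by linarith, by linarith⟩
  calc (M / L) ^ Fintype.card ι = (latticeCube (0 : ι → ℤ) (M / L)).ncard :=
        (ncard_latticeCube 0 _).symm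
    _ ≤ (block '' (latticeCube b M ∩ A)).ncard := Set.ncard_le_ncard hblock (hfin.image block)
    _ ≤ (latticeCube b M ∩ A).ncard := Set.ncard_image_le hfin

end Cube

section HittingTimes

variable {G X : Type*} [AddGroup G] [AddAction G X]

variable (G) in
/-- The times `g` at which the backward orbit `g ↦ -g +ᵥ x` of `x` visits `F`. The sign is that of
`T^{-m} x ∈ F` in the theorem. -/
def hittingTimes (x : X) (F : Set X) : Set G :=
  {g | -g +ᵥ x ∈ F}

lemma exists_finset_hittingTimes_sub_eq_univ [TopologicalSpace X] [CompactSpace X]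
    [ContinuousConstVAdd G X] {F : Set X} (hF : IsOpen F) (hmeets : ∀ x : X, ∃ g : G, g +ᵥ x ∈ F) :
    ∃ K : Finset G, ∀ x : X, hittingTimes G x F - (K : Set G) = Set.univ := by
  obtain ⟨K, hK⟩ := isCompact_univ.elim_finite_subcover (fun g : G => (-g +ᵥ ·) ⁻¹' F)
    (fun g => hF.preimage (continuous_const_vadd (-g)))
    fun x _ => Set.mem_iUnion.2 ((hmeets x).imp' Neg.neg fun g hg => by simpa using hg)
  refine ⟨K, fun x => Set.eq_univ_of_forall fun g => ?_⟩
  obtain ⟨k, hk, hkF⟩ := Set.mem_iUnion₂.1 (hK (Set.mem_univ (-g +ᵥ x)))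
  refine Set.mem_sub.2 ⟨g + k, ?_, k, hk, add_sub_cancel_right g k⟩
  simpa [hittingTimes, add_vadd] using hkF

end HittingTimes

theorem minimal_orbit_hitting_density_general {ι X : Type*} [Fintype ι] [TopologicalSpace X]
    [CompactSpace X] [AddAction (ι → ℤ) X] [ContinuousConstVAdd (ι → ℤ) X] {F : Set X}
    (hF : IsOpen F) (hmeets : ∀ x : X, ∃ n : ι → ℤ, n +ᵥ x ∈ F) :
    ∃ δ : ℝ, 0 < δ ∧ ∃ N : ℕ, ∀ M : ℕ, N ≤ M → ∀ (x : X) (b : ι → ℤ),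
      δ * (M : ℝ) ^ Fintype.card ι < (latticeCube b M ∩ hittingTimes (ι → ℤ) x F).ncard := by
  obtain ⟨K, hK⟩ := exists_finset_hittingTimes_sub_eq_univ hF hmeets
  obtain ⟨L, hL, hKL⟩ := exists_latticeCube_inter_nonempty_of_sub_eq_univ K
  -- The factor `1 / 2` makes the inequality strict also when `ι` is empty.
  refine ⟨1 / 2 * (1 / (2 * L)) ^ Fintype.card ι, by positivity, L, fun M hM x b => ?_⟩
  have hMpos : 0 < M := hL.trans_le hM
  calc 1 / 2 * (1 / (2 * L)) ^ Fintype.card ι * (M : ℝ) ^ Fintype.card ι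
      = 1 / 2 * ((M : ℝ) / (2 * L)) ^ Fintype.card ι := by
        rw [mul_assoc, ← mul_pow, one_div_mul_eq_div (2 * (L : ℝ))]
    _ < ((M : ℝ) / (2 * L)) ^ Fintype.card ι := mul_lt_of_lt_one_left (by positivity) (by norm_num)
    _ ≤ ((M / L : ℕ) : ℝ) ^ Fintype.card ι := by
        gcongr
        exact div_two_mul_le_natCast_div hL hM
    _ ≤ (latticeCube b M ∩ hittingTimes (ι → ℤ) x F).ncard :=
        mod_cast pow_div_le_ncard_latticeCube_inter hL (hKL _ (hK x)) b M

/-- let `T` be a minimal `ℤ^d`-action on a nonempty compact metric space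
`X` and let `F ⊆ X` be a nonempty open set.  Then there exist `δ > 0` and `N ∈ ℕ` such
that for every `M ≥ N` and every `x ∈ X`,
`#{m ∈ {0,…,M-1}^d : T^{-m} x ∈ F} > δ·M^d`. -/
theorem minimal_orbit_hitting_density {X : Type*} [MetricSpace X] [CompactSpace X]
    [Nonempty X]
    (d : ℕ) (hd : 1 ≤ d) (T : (Fin d → ℤ) → X → X)
    (hTc : ∀ n, Continuous (T n)) (hT0 : ∀ x, T 0 x = x)
    (hTadd : ∀ m n x, T (m + n) x = T m (T n x))
    (hmin : ∀ x : X, Dense (Set.range fun n : Fin d → ℤ => T n x))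
    (F : Set X) (hF : IsOpen F) (hFne : F.Nonempty) :
    ∃ δ : ℝ, 0 < δ ∧ ∃ N : ℕ, ∀ M : ℕ, N ≤ M → ∀ x : X,
      δ * (M : ℝ) ^ d <
        (Nat.card {m : Fin d → ℤ // (∀ i, 0 ≤ m i ∧ m i < (M : ℤ)) ∧ T (-m) x ∈ F} : ℝ) := by
  let : AddAction (Fin d → ℤ) X := { vadd := T, zero_vadd := hT0, add_vadd := hTadd }
  have : ContinuousConstVAdd (Fin d → ℤ) X := ⟨hTc⟩
  obtain ⟨δ, hδ, N, hN⟩ := minimal_orbit_hitting_density_general (ι := Fin d) hF fun x =>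
    Set.exists_range_iff.1 ((hmin x).exists_mem_open hF hFne)
  refine ⟨δ, hδ, N, fun M hM x => ?_⟩
  simpa [latticeCube, ← Nat.card_coe_set_eq] using! hN M hM x 0
end
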